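/- Under the Pólya urn hypotheses, assume sup_n ‖X_{n+1} − X_n‖_p < ∞ for every p ≥ 2, that Re λ₂ = b/2 (where λ₂ is a second eigenvalue of A as in the stated ordering, λ₁ = b), and that (X_n − E X_n)/√(n (log n)^{2ν₂+1}) converges in distribution as n → ∞ to the centered Gaussian law N(0, Σ) on ℝ^q for some covariance matrix Σ, where ν₂ := ν_{λ₂}. Then the convergence holds with convergence of all moments: for every real r ≥ 1, E|(X_n − E X_n)/√(n (log n)^{2ν₂+1})|^r → E|Z|^r, and for every multi-index α ∈ ℕ^q the corresponding mixed moments converge to those of Z ~ N(0, Σ). In particular, Cov(X_n)/(n (log n)^{2ν₂+1}) → Σ entrywise. -/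

import Mathlib

open MeasureTheory Matrix Filter

/-- `P` is the spectral projection of `A` for the eigenvalue `lam`: it is the identity
on the generalized eigenspace E_lam = ker((A − lam I)^q) and vanishes on the generalized
eigenspace E_mu = ker((A − mu I)^q) of every other eigenvalue `mu`. Since ℂ^q is the
direct sum of the generalized eigenspaces, these conditions determine `P` uniquely. -/
def IsSpectralProj {q : ℕ} (A : Matrix (Fin q) (Fin q) ℂ) (lam : ℂ)
    (P : Matrix (Fin q) (Fin q) ℂ) : Prop :=
  (∀ v : Fin q → ℂ, ((A - lam • 1) ^ q).mulVec v = 0 → P.mulVec v = v) ∧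
  ∀ mu : ℂ, mu ≠ lam → ∀ v : Fin q → ℂ, ((A - mu • 1) ^ q).mulVec v = 0 → P.mulVec v = 0

/-- `ν` is the nilpotency index ν_lam of N_lam := (A − lam I) P_lam, i.e. the unique
integer ν ≥ 0 with N_lam^(ν+1) = 0 and (ν = 0 or N_lam^ν ≠ 0). -/
def NilIndexOf {q : ℕ} (A : Matrix (Fin q) (Fin q) ℂ) (lam : ℂ)
    (P : Matrix (Fin q) (Fin q) ℂ) (ν : ℕ) : Prop :=
  ((A - lam • 1) * P) ^ (ν + 1) = 0 ∧ (ν = 0 ∨ ((A - lam • 1) * P) ^ ν ≠ 0)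

/-- `mu` is a candidate for the second eigenvalue λ₂ in the ordered listing
λ₁, λ₂, …, λ_q of the eigenvalues of `Ac` with algebraic multiplicity (λ₁ = b being
first): either `mu` is an eigenvalue different from b, or `mu = b` and b occurs with
algebraic multiplicity at least 2. -/
def MemSecondEigSet {q : ℕ} (Ac : Matrix (Fin q) (Fin q) ℂ) (b : ℝ) (mu : ℂ) : Prop :=
  (mu ≠ (b : ℂ) ∧ mu ∈ spectrum ℂ Ac) ∨
  (mu = (b : ℂ) ∧ 2 ≤ Polynomial.rootMultiplicity (b : ℂ) (Matrix.charpoly Ac))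



/-- monomial bound -/
lemma mono_bound {X Y : ℝ} (hX : 0 ≤ X) (hY : 0 ≤ Y) (i j : ℕ) (n : ℕ) (h : i + j = n) :
    X ^ i * Y ^ (j + 2) ≤ X ^ n * Y ^ 2 + Y ^ (n + 2) := by
  subst h
  rcases le_total X Y with hXY | hXY
  · have h1 : X ^ i ≤ Y ^ i := pow_le_pow_left₀ hX hXY i
    have h2 : X ^ i * Y ^ (j + 2) ≤ Y ^ i * Y ^ (j + 2) := by gcongr
    have h3 : Y ^ i * Y ^ (j + 2) = Y ^ (i + j + 2) := by ring
    have : 0 ≤ X ^ (i + j) * Y ^ 2 := by positivity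
    linarith
  · have h1 : Y ^ j ≤ X ^ j := pow_le_pow_left₀ hY hXY j
    have h2 : X ^ i * Y ^ (j + 2) = X ^ i * Y ^ j * Y ^ 2 := by ring
    have h3 : X ^ i * Y ^ j * Y ^ 2 ≤ X ^ i * X ^ j * Y ^ 2 := by gcongr
    have h4 : X ^ i * X ^ j * Y ^ 2 = X ^ (i + j) * Y ^ 2 := by ring
    have : 0 ≤ Y ^ (i + j + 2) := by positivity
    linarith

lemma scalar_bound (m : ℕ) : ∃ C : ℝ, 0 ≤ C ∧ ∀ X Y z : ℝ, 0 ≤ X → 0 ≤ Y → |z| ≤ X * Y →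
    (X ^ 2 + 2 * z + Y ^ 2) ^ (m + 1) ≤ X ^ (2 * m + 2) + 2 * (m + 1) * X ^ (2 * m) * z
      + C * (X ^ (2 * m) * Y ^ 2 + Y ^ (2 * m + 2)) := by
  induction m with
  | zero =>
    refine ⟨1, zero_le_one, fun X Y z hX hY hz => ?_⟩
    simp only [Nat.cast_zero, mul_zero, zero_add, pow_zero, pow_one]
    nlinarith [sq_nonneg Y]
  | succ m ih =>
    obtain ⟨C, hC, h⟩ := ih
    refine ⟨1 + 6 * (m + 1) + 8 * C, by positivity, fun X Y z hX hY hz => ?_⟩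
    have h0 := h X Y z hX hY hz
    obtain ⟨hz1, hz2⟩ := abs_le.1 hz
    have hq : 0 ≤ X ^ 2 + 2 * z + Y ^ 2 := by nlinarith [sq_nonneg (X - Y)]
    have hq2 : X ^ 2 + 2 * z + Y ^ 2 ≤ 2 * X ^ 2 + 2 * Y ^ 2 := by nlinarith [sq_nonneg (X - Y)]
    have h1 := mul_le_mul_of_nonneg_right h0 hq
    have hzz : z ^ 2 ≤ X ^ 2 * Y ^ 2 := by
      rw [← mul_pow]; exact sq_le_sq' hz1 hz2
    have hR : 0 ≤ C * (X ^ (2 * m) * Y ^ 2 + Y ^ (2 * m + 2)) := by positivity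
    have h2 := mul_le_mul_of_nonneg_left hq2 hR
    set S := X ^ (2 * m + 2) * Y ^ 2 + Y ^ (2 * m + 4) with hS
    have b1 := mono_bound hX hY (2 * m + 2) 0 (2 * m + 2) (by ring)
    have b2 := mono_bound hX hY (2 * m + 1) 1 (2 * m + 2) (by ring)
    have b3 := mono_bound hX hY (2 * m) 2 (2 * m + 2) (by ring)
    have b4 := mono_bound hX hY 2 (2 * m) (2 * m + 2) (by ring)
    have b5 := mono_bound hX hY 0 (2 * m + 2) (2 * m + 2) (by ring)
    have e1 : X ^ (2 * m) * z ^ 2 ≤ S := by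
      have : X ^ (2 * m) * z ^ 2 ≤ X ^ (2 * m) * (X ^ 2 * Y ^ 2) := by gcongr
      have e : X ^ (2 * m) * (X ^ 2 * Y ^ 2) = X ^ (2 * m + 2) * Y ^ (0 + 2) := by ring
      linarith
    have e2 : X ^ (2 * m) * (z * Y ^ 2) ≤ S := by
      have : X ^ (2 * m) * (z * Y ^ 2) ≤ X ^ (2 * m) * (X * Y * Y ^ 2) := by gcongr
      have e : X ^ (2 * m) * (X * Y * Y ^ 2) = X ^ (2 * m + 1) * Y ^ (1 + 2) := by ring
      linarith
    have e3 : (X ^ (2 * m) * Y ^ 2 + Y ^ (2 * m + 2)) * (2 * X ^ 2 + 2 * Y ^ 2) ≤ 8 * S := by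
      have e : (X ^ (2 * m) * Y ^ 2 + Y ^ (2 * m + 2)) * (2 * X ^ 2 + 2 * Y ^ 2)
        = 2 * (X ^ (2 * m + 2) * Y ^ (0 + 2)) + 2 * (X ^ (2 * m) * Y ^ (2 + 2))
        + 2 * (X ^ 2 * Y ^ (2 * m + 2)) + 2 * (X ^ 0 * Y ^ (2 * m + 2 + 2)) := by ring
      linarith
    have e4 : X ^ (2 * m + 2) * Y ^ 2 ≤ S := b1
    have e5 := mul_le_mul_of_nonneg_left e3 hC
    have hm : (0:ℝ) ≤ (m:ℝ) + 1 := by positivity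
    have e1' := mul_le_mul_of_nonneg_left e1 hm
    have e2' := mul_le_mul_of_nonneg_left e2 hm
    calc (X ^ 2 + 2 * z + Y ^ 2) ^ (m + 1 + 1)
        = (X ^ 2 + 2 * z + Y ^ 2) ^ (m + 1) * (X ^ 2 + 2 * z + Y ^ 2) := pow_succ _ _
      _ ≤ _ := h1
      _ = X ^ (2 * m + 4) + 2 * (m + 1 + 1) * X ^ (2 * m + 2) * z + X ^ (2 * m + 2) * Y ^ 2
          + 4 * ((m + 1) * (X ^ (2 * m) * z ^ 2)) + 2 * ((m + 1) * (X ^ (2 * m) * (z * Y ^ 2)))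
          + C * (X ^ (2 * m) * Y ^ 2 + Y ^ (2 * m + 2)) * (X ^ 2 + 2 * z + Y ^ 2) := by ring
      _ ≤ X ^ (2 * m + 4) + 2 * (m + 1 + 1) * X ^ (2 * m + 2) * z
          + (1 + 6 * (m + 1) + 8 * C) * S := by nlinarith
      _ = _ := by rw [hS]; push_cast; ring

lemma pointwise_bound (m : ℕ) : ∃ C : ℝ, 0 ≤ C ∧ ∀ x y : ℂ,
    ‖x + y‖ ^ (2 * m + 2) ≤ ‖x‖ ^ (2 * m + 2) + 2 * (m + 1) * (‖x‖ ^ (2 * m) * inner ℝ x y)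
      + C * (‖x‖ ^ (2 * m) * ‖y‖ ^ 2 + ‖y‖ ^ (2 * m + 2)) := by
  obtain ⟨C, hC, h⟩ := scalar_bound m
  refine ⟨C, hC, fun x y => ?_⟩
  have := h ‖x‖ ‖y‖ (inner ℝ x y) (norm_nonneg _) (norm_nonneg _) (abs_real_inner_le_norm x y)
  rw [← norm_add_sq_real, ← pow_mul] at this
  have e : 2 * (m + 1) = 2 * m + 2 := by ring
  rw [e] at this
  linarith

lemma lpNorm_pow_even {Ω : Type*} {m0 : MeasurableSpace Ω} {μ : Measure Ω} {E : Type*}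
    [NormedAddCommGroup E] (m : ℕ) {f : Ω → E}
    (hf : MemLp f (2 * m + 2 : ℕ) μ) :
    ∫ ω, ‖f ω‖ ^ (2 * m + 2) ∂μ = lpNorm f (2 * m + 2 : ℕ) μ ^ (2 * m + 2) := by
  have hne : ((2 * m + 2 : ℕ) : ENNReal) ≠ 0 := by norm_cast
  rw [lpNorm_eq_integral_norm_rpow_toReal hne (ENNReal.natCast_ne_top _) hf.1]
  simp only [ENNReal.toReal_natCast, Real.rpow_natCast]
  rw [← Real.rpow_natCast, ← Real.rpow_mul (by positivity), inv_mul_cancel₀ (by positivity),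
    Real.rpow_one]

lemma holder_even {Ω : Type*} {m0 : MeasurableSpace Ω} {μ : Measure Ω} {E : Type*}
    [NormedAddCommGroup E] (m : ℕ) (hm : 1 ≤ m) {f g : Ω → E}
    (hf : MemLp f (2 * m + 2 : ℕ) μ) (hg : MemLp g (2 * m + 2 : ℕ) μ) :
    ∫ ω, ‖f ω‖ ^ (2 * m) * ‖g ω‖ ^ 2 ∂μ ≤
      lpNorm f (2 * m + 2 : ℕ) μ ^ (2 * m) * lpNorm g (2 * m + 2 : ℕ) μ ^ 2 := by
  have hm' : (0:ℝ) < m := by exact_mod_cast hm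
  have hpq : Real.HolderConjugate (((m : ℝ) + 1) / m) ((m : ℝ) + 1) := by
    refine Real.holderConjugate_iff.2 ⟨?_, ?_⟩
    · rw [lt_div_iff₀ hm']; linarith
    · field_simp
  have hfi := hf.integrable_norm_pow (p := 2 * m + 2) (by positivity)
  have hgi := hg.integrable_norm_pow (p := 2 * m + 2) (by positivity)
  have e1 : ∀ x : ℝ, 0 ≤ x → (x ^ (2 * m)) ^ (((m : ℝ) + 1) / m) = x ^ (2 * m + 2) := by
    intro x hx
    rw [← Real.rpow_natCast, ← Real.rpow_mul hx, ← Real.rpow_natCast]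
    congr 1; push_cast; field_simp
  have e2 : ∀ x : ℝ, 0 ≤ x → (x ^ 2) ^ ((m : ℝ) + 1) = x ^ (2 * m + 2) := by
    intro x hx
    rw [← Real.rpow_natCast, ← Real.rpow_mul hx, ← Real.rpow_natCast]
    congr 1; push_cast; ring
  have k1 : MemLp (fun ω => ‖f ω‖ ^ (2 * m)) (ENNReal.ofReal (((m : ℝ) + 1) / m)) μ := by
    rw [← integrable_norm_rpow_iff (f := fun ω => ‖f ω‖ ^ (2 * m)) (hf.1.norm.pow _)
      (by simpa using (by positivity)) (by simp)]
    refine hfi.congr (ae_of_all _ fun ω => ?_)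
    simp only [norm_pow, norm_norm]
    rw [ENNReal.toReal_ofReal (by positivity), e1 _ (norm_nonneg _)]
  have k2 : MemLp (fun ω => ‖g ω‖ ^ 2) (ENNReal.ofReal ((m : ℝ) + 1)) μ := by
    rw [← integrable_norm_rpow_iff (f := fun ω => ‖g ω‖ ^ 2) (hg.1.norm.pow _)
      (by simpa using (by positivity)) (by simp)]
    refine hgi.congr (ae_of_all _ fun ω => ?_)
    simp only [norm_pow, norm_norm]
    rw [ENNReal.toReal_ofReal (by positivity), e2 _ (norm_nonneg _)]
  have := integral_mul_le_Lp_mul_Lq_of_nonneg hpq (μ := μ)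
    (f := fun ω => ‖f ω‖ ^ (2 * m)) (g := fun ω => ‖g ω‖ ^ 2)
    (ae_of_all _ fun ω => by positivity) (ae_of_all _ fun ω => by positivity) k1 k2
  refine this.trans (le_of_eq ?_)
  simp only [e1 _ (norm_nonneg _), e2 _ (norm_nonneg _)]
  rw [lpNorm_pow_even m hf, lpNorm_pow_even m hg]
  have hF : 0 ≤ lpNorm f (2 * m + 2 : ℕ) μ := lpNorm_nonneg
  have hG : 0 ≤ lpNorm g (2 * m + 2 : ℕ) μ := lpNorm_nonneg
  congr 1
  · rw [← Real.rpow_natCast, ← Real.rpow_mul hF, ← Real.rpow_natCast]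
    congr 1; push_cast; field_simp
  · rw [← Real.rpow_natCast, ← Real.rpow_mul hG, ← Real.rpow_natCast]
    congr 1; push_cast; field_simp

/-- One step inequality. -/
lemma one_step {Ω : Type*} {m0 : MeasurableSpace Ω} {μ : Measure Ω} [IsFiniteMeasure μ]
    (m : ℕ) (hm : 1 ≤ m) : ∃ K : ℝ, 0 ≤ K ∧ ∀ f g : Ω → ℂ,
    MemLp f (2 * m + 2 : ℕ) μ → MemLp g (2 * m + 2 : ℕ) μ →
    Integrable (fun ω => ‖f ω‖ ^ (2 * m) * inner ℝ (f ω) (g ω)) μ →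
    ∫ ω, ‖f ω‖ ^ (2 * m) * inner ℝ (f ω) (g ω) ∂μ = 0 →
    lpNorm (fun ω => f ω + g ω) (2 * m + 2 : ℕ) μ ^ 2 ≤
      lpNorm f (2 * m + 2 : ℕ) μ ^ 2 + K * lpNorm g (2 * m + 2 : ℕ) μ ^ 2 := by
  obtain ⟨C, hC, h⟩ := pointwise_bound m
  refine ⟨2 * C + 1, by positivity, fun f g hf hg hi h0 => ?_⟩
  have hfi := hf.integrable_norm_pow (p := 2 * m + 2) (by positivity)
  have hgi := hg.integrable_norm_pow (p := 2 * m + 2) (by positivity)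
  have hfgi := (hf.add hg).integrable_norm_pow (p := 2 * m + 2) (by positivity)
  have hmix : Integrable (fun ω => ‖f ω‖ ^ (2 * m) * ‖g ω‖ ^ 2) μ := by
    refine (hfi.add hgi).mono' ((hf.1.norm.pow _).mul (hg.1.norm.pow _)) (ae_of_all _ fun ω => ?_)
    rw [Real.norm_of_nonneg (by positivity)]
    simp only [Pi.add_apply]
    rcases le_total ‖f ω‖ ‖g ω‖ with hh | hh
    · calc ‖f ω‖ ^ (2 * m) * ‖g ω‖ ^ 2 ≤ ‖g ω‖ ^ (2 * m) * ‖g ω‖ ^ 2 := by gcongr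
        _ = ‖g ω‖ ^ (2 * m + 2) := by ring
        _ ≤ _ := by have : 0 ≤ ‖f ω‖ ^ (2 * m + 2) := by positivity
                    linarith
    · calc ‖f ω‖ ^ (2 * m) * ‖g ω‖ ^ 2 ≤ ‖f ω‖ ^ (2 * m) * ‖f ω‖ ^ 2 := by gcongr
        _ = ‖f ω‖ ^ (2 * m + 2) := by ring
        _ ≤ _ := by have : 0 ≤ ‖g ω‖ ^ (2 * m + 2) := by positivity
                    linarith
  have key : ∫ ω, ‖f ω + g ω‖ ^ (2 * m + 2) ∂μ ≤
      ∫ ω, (‖f ω‖ ^ (2 * m + 2) + 2 * (m + 1) * (‖f ω‖ ^ (2 * m) * inner ℝ (f ω) (g ω))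
      + C * (‖f ω‖ ^ (2 * m) * ‖g ω‖ ^ 2 + ‖g ω‖ ^ (2 * m + 2))) ∂μ := by
    refine integral_mono hfgi ?_ fun ω => h _ _
    exact (hfi.add (hi.const_mul _)).add ((hmix.add hgi).const_mul _)
  have hsplit : ∫ ω, (‖f ω‖ ^ (2 * m + 2) + 2 * (m + 1) * (‖f ω‖ ^ (2 * m) * inner ℝ (f ω) (g ω))
      + C * (‖f ω‖ ^ (2 * m) * ‖g ω‖ ^ 2 + ‖g ω‖ ^ (2 * m + 2))) ∂μ
      = ∫ ω, ‖f ω‖ ^ (2 * m + 2) ∂μ + C * (∫ ω, ‖f ω‖ ^ (2 * m) * ‖g ω‖ ^ 2 ∂μ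
        + ∫ ω, ‖g ω‖ ^ (2 * m + 2) ∂μ) := by
    have i1 : Integrable (fun ω => ‖f ω‖ ^ (2 * m + 2)
        + 2 * (m + 1) * (‖f ω‖ ^ (2 * m) * inner ℝ (f ω) (g ω))) μ := hfi.add (hi.const_mul _)
    have i2 : Integrable (fun ω => C * (‖f ω‖ ^ (2 * m) * ‖g ω‖ ^ 2 + ‖g ω‖ ^ (2 * m + 2))) μ :=
      (hmix.add hgi).const_mul _
    rw [integral_add i1 i2,
      integral_add hfi (hi.const_mul _), integral_const_mul, h0, integral_const_mul,
      integral_add hmix hgi]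
    ring
  rw [hsplit, lpNorm_pow_even m hf, lpNorm_pow_even m hg,
    lpNorm_pow_even m (f := fun ω => f ω + g ω) (hf.add hg)] at key
  have hH := holder_even m hm hf hg
  have hF : 0 ≤ lpNorm f (2 * m + 2 : ℕ) μ := lpNorm_nonneg
  have hG : 0 ≤ lpNorm g (2 * m + 2 : ℕ) μ := lpNorm_nonneg
  set F := lpNorm f (2 * m + 2 : ℕ) μ
  set G := lpNorm g (2 * m + 2 : ℕ) μ
  set S := lpNorm (fun ω => f ω + g ω) (2 * m + 2 : ℕ) μ
  have hU : 0 ≤ F ^ 2 + (2 * C + 1) * G ^ 2 := by positivity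
  refine le_of_pow_le_pow_left₀ (n := m + 1) (by omega) hU ?_
  have hH' := mul_le_mul_of_nonneg_left hH hC
  have b1 : (F ^ 2 + (2 * C + 1) * G ^ 2) ^ (m + 1) ≥
      F ^ (2 * m + 2) + C * (F ^ (2 * m) * G ^ 2) + C * G ^ (2 * m + 2) := by
    have hu : (0:ℝ) ≤ F ^ 2 := by positivity
    have hv : (0:ℝ) ≤ G ^ 2 := by positivity
    have p1 : F ^ (2 * m + 2) = (F ^ 2) ^ (m + 1) := by rw [← pow_mul]; ring_nf
    have p2 : F ^ (2 * m) = (F ^ 2) ^ m := by rw [← pow_mul]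
    have p3 : G ^ (2 * m + 2) = (G ^ 2) ^ (m + 1) := by rw [← pow_mul]; ring_nf
    rw [p1, p2, p3]
    generalize F ^ 2 = u at *
    generalize G ^ 2 = v at *
    have c1 : u ^ m ≤ (u + (2 * C + 1) * v) ^ m := by
      gcongr
      have : 0 ≤ (2 * C + 1) * v := by positivity
      linarith
    have c2 : v ^ m ≤ (u + (2 * C + 1) * v) ^ m := by
      gcongr
      nlinarith [mul_nonneg hC hv]
    have c3 := mul_le_mul_of_nonneg_left c1 hu
    have c4 := mul_le_mul_of_nonneg_left c1 (mul_nonneg hC hv)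
    have c5 := mul_le_mul_of_nonneg_left c2 (mul_nonneg hC hv)
    have c6 : 0 ≤ v * (u + (2 * C + 1) * v) ^ m := by positivity
    rw [pow_succ (u + (2 * C + 1) * v), pow_succ u, pow_succ v]
    linarith
  have : (S ^ 2) ^ (m + 1) = S ^ (2 * m + 2) := by rw [← pow_mul]; ring_nf
  rw [this]
  linarith

lemma cond_orth {Ω : Type*} {m m0 : MeasurableSpace Ω} {μ : Measure Ω} [IsFiniteMeasure μ]
    (hm : m ≤ m0) (k : ℕ) {f g : Ω → ℂ} (hf : StronglyMeasurable[m] f)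
    (hfp : MemLp f (2 * k + 2 : ℕ) μ) (hgp : MemLp g (2 * k + 2 : ℕ) μ)
    (hg : μ[g | m] =ᵐ[μ] 0) :
    Integrable (fun ω => ‖f ω‖ ^ (2 * k) * inner ℝ (f ω) (g ω)) μ ∧
    ∫ ω, ‖f ω‖ ^ (2 * k) * inner ℝ (f ω) (g ω) ∂μ = 0 := by
  have hfi := hfp.integrable_norm_pow (p := 2 * k + 2) (by positivity)
  have hgi := hgp.integrable_norm_pow (p := 2 * k + 2) (by positivity)
  have hgint : Integrable g μ := hgp.integrable (by norm_cast; omega)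
  have hIntg : Integrable (fun ω => ‖f ω‖ ^ (2 * k) * inner ℝ (f ω) (g ω)) μ := by
    refine (hfi.add hgi).mono' ((hfp.1.norm.pow _).mul (hfp.1.inner hgp.1))
      (ae_of_all _ fun ω => ?_)
    rw [norm_mul, norm_pow, norm_norm]
    have h1 : ‖f ω‖ ^ (2 * k) * ‖(inner ℝ (f ω) (g ω) : ℝ)‖ ≤ ‖f ω‖ ^ (2 * k) * (‖f ω‖ * ‖g ω‖) := by
      gcongr; exact norm_inner_le_norm _ _
    refine h1.trans ?_
    simp only [Pi.add_apply]
    rcases le_total ‖f ω‖ ‖g ω‖ with hh | hh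
    · calc ‖f ω‖ ^ (2 * k) * (‖f ω‖ * ‖g ω‖) ≤ ‖g ω‖ ^ (2 * k) * (‖g ω‖ * ‖g ω‖) := by gcongr
        _ = ‖g ω‖ ^ (2 * k + 2) := by ring
        _ ≤ _ := by have : 0 ≤ ‖f ω‖ ^ (2 * k + 2) := by positivity
                    linarith
    · calc ‖f ω‖ ^ (2 * k) * (‖f ω‖ * ‖g ω‖) ≤ ‖f ω‖ ^ (2 * k) * (‖f ω‖ * ‖f ω‖) := by gcongr
        _ = ‖f ω‖ ^ (2 * k + 2) := by ring
        _ ≤ _ := by have : 0 ≤ ‖g ω‖ ^ (2 * k + 2) := by positivity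
                    linarith
  refine ⟨hIntg, ?_⟩
  have hF : StronglyMeasurable[m] (fun ω => ‖f ω‖ ^ (2 * k) • f ω) := (hf.norm.pow _).smul hf
  have e : (fun ω => ‖f ω‖ ^ (2 * k) * inner ℝ (f ω) (g ω)) =
      fun ω => innerSL ℝ (‖f ω‖ ^ (2 * k) • f ω) (g ω) := by
    funext ω
    rw [innerSL_apply_apply, real_inner_smul_left]
  rw [e] at hIntg ⊢
  have := condExp_bilin_of_stronglyMeasurable_left (innerSL ℝ (E := ℂ)) hF hIntg hgint
  rw [← integral_condExp hm, integral_congr_ae this]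
  refine (integral_congr_ae (g := 0) ?_).trans (by simp)
  filter_upwards [hg] with ω hω
  simp [hω]


lemma exists_bound_of_step {u v : ℕ → ℝ} (hu : ∀ n, 0 ≤ u n) (hv : ∀ n, 0 < v n) (N : ℕ) (D0 : ℝ)
    (hstep : ∀ n ≥ N, ∀ D ≥ D0, 0 ≤ D → u n ≤ D * v n → u (n + 1) ≤ D * v (n + 1)) :
    ∃ D : ℝ, 0 ≤ D ∧ ∀ n, u n ≤ D * v n := by
  set D : ℝ := |D0| + ∑ i ∈ Finset.range (N + 1), u i / v i with hD
  have hs : ∀ i, 0 ≤ u i / v i := fun i => div_nonneg (hu i) (hv i).le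
  have hsum : 0 ≤ ∑ i ∈ Finset.range (N + 1), u i / v i := Finset.sum_nonneg fun i _ => hs i
  have hD0 : D0 ≤ D := by have := le_abs_self D0; linarith
  have hDn : 0 ≤ D := by positivity
  refine ⟨D, hDn, fun n => ?_⟩
  have hsmall : ∀ n ≤ N, u n ≤ D * v n := by
    intro n hn
    have h1 : u n / v n ≤ ∑ i ∈ Finset.range (N + 1), u i / v i :=
      Finset.single_le_sum (f := fun i => u i / v i) (fun i _ => hs i)
        (Finset.mem_range.2 (by omega))
    have h2 : u n / v n ≤ D := by have := abs_nonneg D0; linarith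
    exact (div_le_iff₀ (hv n)).1 h2
  rcases le_total n N with h | h
  · exact hsmall n h
  · induction n, h using Nat.le_induction with
    | base => exact hsmall N le_rfl
    | succ n hn ih => exact hstep n hn D hD0 hDn ih

lemma add_sq_young {x y t : ℝ} (ht : 0 < t) : (x + y) ^ 2 ≤ x ^ 2 * (1 + t) + y ^ 2 * (1 + 1 / t) := by
  have h : 0 ≤ (t * x - y) ^ 2 / t := by positivity
  have e : (t * x - y) ^ 2 / t = t * x ^ 2 - 2 * x * y + y ^ 2 / t := by field_simp; ring
  have e2 : y ^ 2 * (1 + 1 / t) = y ^ 2 + y ^ 2 / t := by ring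
  nlinarith

lemma norm_one_add_sq (lam : ℂ) {w : ℝ} (hw : 0 < w) :
    ‖1 + lam / (w : ℂ)‖ ^ 2 = 1 + 2 * lam.re / w + ‖lam‖ ^ 2 / w ^ 2 := by
  rw [← Complex.normSq_eq_norm_sq, ← Complex.normSq_eq_norm_sq, Complex.normSq_apply,
    Complex.normSq_apply]
  simp only [Complex.add_re, Complex.one_re, Complex.add_im, Complex.one_im,
    Complex.div_ofReal_re, Complex.div_ofReal_im]
  field_simp
  ring

lemma w_tendsto {b w0 : ℝ} (hb : 0 < b) : Tendsto (fun n : ℕ => w0 + n * b) atTop atTop :=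
  tendsto_atTop_add_const_left _ _ (tendsto_natCast_atTop_atTop.atTop_mul_const hb)

/-- subcritical recursion -/
lemma rec_sub {b w0 : ℝ} (hb : 0 < b) (hw0 : 0 < w0) {lam : ℂ} (hl : lam.re < b / 2)
    {s g : ℕ → ℝ} {C G : ℝ}
    (hg : ∀ n : ℕ, g n ^ 2 ≤ G * (w0 + n * b))
    (hrec : ∀ n : ℕ, s (n + 1) ^ 2 ≤
      (‖1 + lam / ((w0 + n * b : ℝ) : ℂ)‖ * s n + g n / (w0 + n * b)) ^ 2 + C) :
    ∃ D : ℝ, 0 ≤ D ∧ ∀ n : ℕ, s n ^ 2 ≤ D * (w0 + n * b) := by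
  have hw : ∀ n : ℕ, 0 < w0 + n * b := fun n => by positivity
  set d : ℝ := (b - 2 * lam.re) / 2 with hd
  have hdpos : 0 < d := by rw [hd]; linarith
  set c : ℝ := ‖lam‖ ^ 2 with hc
  have hcn : 0 ≤ c := by positivity
  obtain ⟨N, hN⟩ := ((w_tendsto (w0 := w0) hb).eventually_ge_atTop
    (max 1 (2 * (c + |2 * lam.re * d| + c * d) / d))).exists_forall_of_atTop
  have hG : 0 ≤ G := by
    by_contra h
    push Not at h
    have := hg 0
    nlinarith [sq_nonneg (g 0), hw 0]
  refine exists_bound_of_step (fun n => sq_nonneg _) hw N (2 * (|C| + G + G / d) / d) ?_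
  intro n hn D hD hDn hi
  have hwn := hw n
  have h1 := hN n hn
  have hw1 := (le_max_left _ _).trans h1
  have hw2 := (le_max_right _ _).trans h1
  push_cast
  have hr := hrec n
  have hgn := hg n
  have ew : w0 + ((n : ℝ) + 1) * b = (w0 + n * b) + b := by ring
  rw [ew]
  generalize w0 + (n : ℝ) * b = w at *
  have hy := add_sq_young (x := ‖1 + lam / (w : ℂ)‖ * s n) (y := g n / w) (t := d / w) (by positivity)
  rw [mul_pow, norm_one_add_sq lam hwn, ← hc] at hy
  have hgw : (g n / w) ^ 2 * (1 + 1 / (d / w)) ≤ G + G / d := by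
    have e : (g n / w) ^ 2 * (1 + 1 / (d / w)) = g n ^ 2 / w * (1 / w + 1 / d) := by
      field_simp
    have e1 : g n ^ 2 / w ≤ G := by rw [div_le_iff₀ hwn]; exact hgn
    have e2 : 1 / w ≤ 1 := by rw [div_le_one hwn]; exact hw1
    have e3 : 0 ≤ g n ^ 2 / w := by positivity
    rw [e]
    calc g n ^ 2 / w * (1 / w + 1 / d) ≤ G * (1 + 1 / d) := by gcongr
      _ = _ := by ring
  have hlre : 2 * lam.re = b - 2 * d := by rw [hd]; ring
  have hcoef : 0 ≤ (1 + 2 * lam.re / w + c / w ^ 2) * (1 + d / w) := by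
    rw [hc, ← norm_one_add_sq lam hwn]; positivity
  have hcoef2 : (1 + 2 * lam.re / w + c / w ^ 2) * (1 + d / w) ≤ 1 + (b - d / 2) / w := by
    have e : (1 + 2 * lam.re / w + c / w ^ 2) * (1 + d / w) =
        1 + (b - d) / w + (c + 2 * lam.re * d + c * d / w) / w / w := by
      rw [hlre]; field_simp; ring
    have e1 : (c + 2 * lam.re * d + c * d / w) / w ≤ d / 2 := by
      rw [div_le_iff₀ hwn]
      rw [div_le_iff₀ hdpos] at hw2
      have : c * d / w ≤ c * d := div_le_self (by positivity) hw1
      have := le_abs_self (2 * lam.re * d)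
      linarith
    rw [e]
    have : (c + 2 * lam.re * d + c * d / w) / w / w ≤ d / 2 / w := by gcongr
    have e3 : (b - d / 2) / w = (b - d) / w + d / 2 / w := by ring
    linarith
  have h3 : (1 + 2 * lam.re / w + c / w ^ 2) * s n ^ 2 * (1 + d / w) ≤
      D * w + D * b - D * d / 2 := by
    calc (1 + 2 * lam.re / w + c / w ^ 2) * s n ^ 2 * (1 + d / w)
        = (1 + 2 * lam.re / w + c / w ^ 2) * (1 + d / w) * s n ^ 2 := by ring
      _ ≤ (1 + 2 * lam.re / w + c / w ^ 2) * (1 + d / w) * (D * w) := by gcongr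
      _ ≤ (1 + (b - d / 2) / w) * (D * w) := by gcongr
      _ = _ := by field_simp; ring
  rw [ge_iff_le, div_le_iff₀ hdpos] at hD
  have := le_abs_self C
  linarith

/-- the logarithmic scale -/
noncomputable def Lseq (w0 b : ℝ) (n : ℕ) : ℝ := 1 + ∑ j ∈ Finset.range n, 1 / (w0 + j * b)

lemma Lseq_succ (w0 b : ℝ) (n : ℕ) : Lseq w0 b (n + 1) = Lseq w0 b n + 1 / (w0 + n * b) := by
  simp [Lseq, Finset.sum_range_succ, add_assoc]

lemma one_le_Lseq {w0 b : ℝ} (hb : 0 < b) (hw0 : 0 < w0) (n : ℕ) : 1 ≤ Lseq w0 b n := by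
  have : 0 ≤ ∑ j ∈ Finset.range n, 1 / (w0 + (j : ℝ) * b) :=
    Finset.sum_nonneg fun j _ => by positivity
  simp only [Lseq]; linarith

lemma Lseq_le_log {w0 b : ℝ} (hb : 0 < b) (hw0 : 0 < w0) :
    ∃ K : ℝ, 0 < K ∧ ∀ n : ℕ, 2 ≤ n → Lseq w0 b n ≤ K * Real.log n := by
  have h2 : 0 < Real.log 2 := Real.log_pos (by norm_num)
  refine ⟨(1 + 1 / w0 + 1 / b) / Real.log 2 + 1 / b, by positivity, fun n hn => ?_⟩
  have hlog : Real.log 2 ≤ Real.log n := Real.log_le_log (by norm_num) (by exact_mod_cast hn)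
  obtain ⟨k, rfl⟩ : ∃ k, n = k + 1 := ⟨n - 1, by omega⟩
  have h1 : Lseq w0 b (k + 1) ≤ 1 + 1 / w0 + (harmonic k : ℝ) / b := by
    rw [Lseq, Finset.sum_range_succ', harmonic]
    push_cast
    rw [Finset.sum_div]
    have : ∑ j ∈ Finset.range k, 1 / (w0 + ((j : ℝ) + 1) * b) ≤
        ∑ j ∈ Finset.range k, ((j : ℝ) + 1)⁻¹ / b := by
      refine Finset.sum_le_sum fun j _ => ?_
      rw [inv_eq_one_div, div_div]
      exact one_div_le_one_div_of_le (by positivity) (by linarith)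
    simp only [zero_mul, add_zero]
    linarith
  have h3 : (harmonic k : ℝ) ≤ 1 + Real.log (k + 1 : ℕ) := by
    refine (harmonic_le_one_add_log k).trans ?_
    rcases Nat.eq_zero_or_pos k with h | h
    · subst h; simp
    · have : Real.log k ≤ Real.log (k + 1 : ℕ) :=
        Real.log_le_log (by exact_mod_cast h) (by push_cast; linarith)
      linarith
  have h4 : (harmonic k : ℝ) / b ≤ (1 + Real.log (k + 1 : ℕ)) / b := by gcongr
  have h5 : (1 + 1 / w0 + 1 / b) ≤ (1 + 1 / w0 + 1 / b) / Real.log 2 * Real.log (k + 1 : ℕ) := by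
    rw [div_mul_eq_mul_div, le_div_iff₀ h2]
    gcongr
  have h6 : (1 + Real.log (k + 1 : ℕ)) / b = 1 / b + 1 / b * Real.log (k + 1 : ℕ) := by ring
  rw [add_mul]
  linarith

lemma Lseq_div_tendsto {w0 b : ℝ} (hb : 0 < b) (hw0 : 0 < w0) :
    Tendsto (fun n : ℕ => Lseq w0 b n / (w0 + n * b)) atTop (nhds 0) := by
  obtain ⟨K, hK, h⟩ := Lseq_le_log hb hw0
  have hlim : Tendsto (fun n : ℕ => K / b * (Real.log n / n)) atTop (nhds 0) := by
    have h1 : Tendsto (fun n : ℕ => Real.log n / n) atTop (nhds 0) :=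
      (Real.isLittleO_log_id_atTop.tendsto_div_nhds_zero).comp tendsto_natCast_atTop_atTop
    simpa using h1.const_mul (K / b)
  refine squeeze_zero' (Eventually.of_forall fun n => ?_) ?_ hlim
  · have := one_le_Lseq hb hw0 n
    positivity
  · filter_upwards [eventually_ge_atTop 2] with n hn
    have hn0 : (0:ℝ) < n := by positivity
    have hlog : 0 ≤ Real.log n := Real.log_natCast_nonneg n
    calc Lseq w0 b n / (w0 + n * b) ≤ (K * Real.log n) / (n * b) := by
          gcongr
          · exact h n hn
          · linarith
      _ = _ := by field_simp

lemma rec_crit_core {b w0 : ℝ} (hb : 0 < b) (hw0 : 0 < w0) {lam : ℂ} (hl : lam.re = b / 2)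
    (k : ℕ) {s g : ℕ → ℝ} {C G : ℝ}
    (hg : ∀ n : ℕ, g n ^ 2 ≤ G * ((w0 + n * b) * Lseq w0 b n ^ (2 * k + 1)))
    (hrec : ∀ n : ℕ, s (n + 1) ^ 2 ≤
      (‖1 + lam / ((w0 + n * b : ℝ) : ℂ)‖ * s n + g n / (w0 + n * b)) ^ 2 + C) :
    ∃ D : ℝ, 0 ≤ D ∧ ∀ n : ℕ, s n ^ 2 ≤ D * ((w0 + n * b) * Lseq w0 b n ^ (2 * k + 3)) := by
  have hw : ∀ n : ℕ, 0 < w0 + n * b := fun n => by positivity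
  have hL := one_le_Lseq hb hw0
  set c : ℝ := ‖lam‖ ^ 2 with hc
  have hcn : 0 ≤ c := by positivity
  have hlim : Tendsto (fun n : ℕ => c * (Lseq w0 b n / (w0 + n * b))) atTop (nhds 0) := by
    simpa using (Lseq_div_tendsto hb hw0).const_mul c
  obtain ⟨N, hN⟩ := (((w_tendsto (w0 := w0) hb).eventually_ge_atTop
    (max 1 (4 * (b + c)))).and (hlim.eventually_le_const (u := 1 / 2) (by norm_num))).exists_forall_of_atTop
  have hG : 0 ≤ G := by
    by_contra h
    push Not at h
    have h0 := hg 0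
    have : 0 < (w0 + (0 : ℕ) * b) * Lseq w0 b 0 ^ (2 * k + 1) :=
      mul_pos (hw 0) (pow_pos (by linarith [hL 0]) _)
    nlinarith [sq_nonneg (g 0)]
  have hpos : ∀ n : ℕ, 0 < (w0 + n * b) * Lseq w0 b n ^ (2 * k + 3) := fun n =>
    mul_pos (hw n) (pow_pos (by linarith [hL n]) _)
  refine exists_bound_of_step (fun n => sq_nonneg _) hpos N (2 * G + |C|) ?_
  intro n hn D hD hDn hi
  have hwn := hw n
  obtain ⟨h1, hcl⟩ := hN n hn
  have hw1 := (le_max_left _ _).trans h1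
  have hw2 := (le_max_right _ _).trans h1
  have hr := hrec n
  have hgn := hg n
  have hLn := hL n
  rw [Lseq_succ]
  push_cast
  have ew : w0 + ((n : ℝ) + 1) * b = (w0 + n * b) + b := by ring
  rw [ew]
  generalize w0 + (n : ℝ) * b = w at *
  generalize Lseq w0 b n = L at *
  have hL0 : 0 < L := by linarith
  have hy := add_sq_young (x := ‖1 + lam / (w : ℂ)‖ * s n) (y := g n / w) (t := 1 / (w * L))
    (by positivity)
  rw [mul_pow, norm_one_add_sq lam hwn, ← hc, hl] at hy
  have hgw : (g n / w) ^ 2 * (1 + 1 / (1 / (w * L))) ≤ 2 * G * L ^ (2 * k + 2) := by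
    have e : (g n / w) ^ 2 * (1 + 1 / (1 / (w * L))) = g n ^ 2 / w * (1 / w + L) := by
      field_simp
    have e1 : g n ^ 2 / w ≤ G * L ^ (2 * k + 1) := by rw [div_le_iff₀ hwn]; linarith
    have e2 : 1 / w ≤ L := ((div_le_one hwn).2 hw1).trans hLn
    rw [e]
    calc g n ^ 2 / w * (1 / w + L) ≤ G * L ^ (2 * k + 1) * (L + L) := by gcongr
      _ = _ := by ring
  have hbc : b / w + c / w ^ 2 ≤ 1 / 4 := by
    have : c / w ^ 2 ≤ c / w := by
      gcongr; nlinarith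
    have e : b / w + c / w = (b + c) / w := by ring
    have : (b + c) / w ≤ 1 / 4 := by rw [div_le_iff₀ hwn]; linarith
    linarith
  have h3 : (1 + 2 * (b / 2) / w + c / w ^ 2) * s n ^ 2 * (1 + 1 / (w * L)) ≤
      D * ((w + b) * L ^ (2 * k + 3)) + D * L ^ (2 * k + 2) * 2 := by
    calc (1 + 2 * (b / 2) / w + c / w ^ 2) * s n ^ 2 * (1 + 1 / (w * L))
        ≤ (1 + 2 * (b / 2) / w + c / w ^ 2) * (D * (w * L ^ (2 * k + 3))) * (1 + 1 / (w * L)) := by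
          gcongr
      _ = D * ((w + b) * L ^ (2 * k + 3)) + D * L ^ (2 * k + 2) *
          (c * (L / w) + 1 + (b / w + c / w ^ 2)) := by field_simp; ring
      _ ≤ _ := by gcongr; linarith
  have h4 : (w + b) * (L ^ (2 * k + 3) + 3 * L ^ (2 * k + 2) / w) ≤
      (w + b) * (L + 1 / w) ^ (2 * k + 3) := by
    gcongr
    have hB := one_add_mul_le_pow (a := 1 / (w * L)) (by
      have : 0 ≤ 1 / (w * L) := by positivity
      linarith) (2 * k + 3)
    have hk : (3:ℝ) ≤ ((2 * k + 3 : ℕ) : ℝ) := by push_cast; have : (0:ℝ) ≤ k := by positivity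
                                                  linarith
    calc L ^ (2 * k + 3) + 3 * L ^ (2 * k + 2) / w
        = L ^ (2 * k + 3) * (1 + 3 * (1 / (w * L))) := by field_simp; ring
      _ ≤ L ^ (2 * k + 3) * (1 + ((2 * k + 3 : ℕ) : ℝ) * (1 / (w * L))) := by gcongr
      _ ≤ L ^ (2 * k + 3) * (1 + 1 / (w * L)) ^ (2 * k + 3) := by gcongr
      _ = (L + 1 / w) ^ (2 * k + 3) := by rw [← mul_pow]; congr 1; field_simp
  have h5 : (w + b) * (L ^ (2 * k + 3) + 3 * L ^ (2 * k + 2) / w) ≥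
      (w + b) * L ^ (2 * k + 3) + 3 * L ^ (2 * k + 2) := by
    have e : (w + b) * (L ^ (2 * k + 3) + 3 * L ^ (2 * k + 2) / w) =
      (w + b) * L ^ (2 * k + 3) + 3 * L ^ (2 * k + 2) + b * (3 * L ^ (2 * k + 2) / w) := by
      field_simp; ring
    have : 0 ≤ b * (3 * L ^ (2 * k + 2) / w) := by positivity
    linarith
  have h6 := mul_le_mul_of_nonneg_left (h5.trans h4) hDn
  have hLk : 1 ≤ L ^ (2 * k + 2) := one_le_pow₀ hLn
  have hC1 : C ≤ |C| * L ^ (2 * k + 2) := by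
    have := le_abs_self C
    nlinarith [abs_nonneg C]
  have h7 : (2 * G + |C|) * L ^ (2 * k + 2) ≤ D * L ^ (2 * k + 2) := by gcongr
  linarith

lemma rec_crit_zero {b w0 : ℝ} (hb : 0 < b) (hw0 : 0 < w0) {lam : ℂ} (hl : lam.re = b / 2)
    {s : ℕ → ℝ} {C : ℝ}
    (hrec : ∀ n : ℕ, s (n + 1) ^ 2 ≤
      (‖1 + lam / ((w0 + n * b : ℝ) : ℂ)‖ * s n) ^ 2 + C) :
    ∃ D : ℝ, 0 ≤ D ∧ ∀ n : ℕ, s n ^ 2 ≤ D * ((w0 + n * b) * Lseq w0 b n) := by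
  have hw : ∀ n : ℕ, 0 < w0 + n * b := fun n => by positivity
  have hL := one_le_Lseq hb hw0
  set c : ℝ := ‖lam‖ ^ 2 with hc
  have hcn : 0 ≤ c := by positivity
  have hlim : Tendsto (fun n : ℕ => c * (Lseq w0 b n / (w0 + n * b))) atTop (nhds 0) := by
    simpa using (Lseq_div_tendsto hb hw0).const_mul c
  obtain ⟨N, hN⟩ := (hlim.eventually_le_const (u := 1 / 2) (by norm_num)).exists_forall_of_atTop
  have hpos : ∀ n : ℕ, 0 < (w0 + n * b) * Lseq w0 b n := fun n =>
    mul_pos (hw n) (by linarith [hL n])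
  refine exists_bound_of_step (fun n => sq_nonneg _) hpos N (2 * |C|) ?_
  intro n hn D hD hDn hi
  have hwn := hw n
  have hcl := hN n hn
  have hr := hrec n
  have hLn := hL n
  rw [Lseq_succ]
  push_cast
  have ew : w0 + ((n : ℝ) + 1) * b = (w0 + n * b) + b := by ring
  rw [ew]
  generalize w0 + (n : ℝ) * b = w at *
  generalize Lseq w0 b n = L at *
  have hL0 : 0 < L := by linarith
  rw [mul_pow, norm_one_add_sq lam hwn, ← hc, hl] at hr
  have h3 : (1 + 2 * (b / 2) / w + c / w ^ 2) * s n ^ 2 ≤ D * ((w + b) * L) + D * (1 / 2) := by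
    calc (1 + 2 * (b / 2) / w + c / w ^ 2) * s n ^ 2
        ≤ (1 + 2 * (b / 2) / w + c / w ^ 2) * (D * (w * L)) := by
          gcongr
      _ = D * ((w + b) * L) + D * (c * (L / w)) := by field_simp
      _ ≤ _ := by gcongr
  have h4 : D * ((w + b) * (L + 1 / w)) = D * ((w + b) * L) + D + D * b / w := by
    field_simp
    ring
  have : 0 ≤ D * b / w := by positivity
  have := le_abs_self C
  linarith

lemma exists_proj {q : ℕ} (A : Matrix (Fin q) (Fin q) ℂ) (mu : ℂ) (k : ℕ) :
    ∃ p : Polynomial ℂ, IsSpectralProj A mu (Polynomial.aeval A p) ∧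
      (∃ m, ((A - mu • 1) * Polynomial.aeval A p) ^ m = 0) ∧
      ∃ u : Polynomial ℂ, u * (Polynomial.X - Polynomial.C mu) ^ k + p = 1 := by
  classical
  have hc0 : A.charpoly ≠ 0 := A.charpoly_monic.ne_zero
  obtain ⟨r, hr, hnd⟩ := A.charpoly.exists_eq_pow_rootMultiplicity_mul_and_not_dvd hc0 mu
  set m := A.charpoly.rootMultiplicity mu
  set x : Polynomial ℂ := Polynomial.X - Polynomial.C mu with hx
  have hAx : ∀ nu : ℂ, Polynomial.aeval A (Polynomial.X - Polynomial.C nu) = A - nu • 1 := by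
    intro nu
    simp [Algebra.algebraMap_eq_smul_one]
  have hcop : IsCoprime x r := by
    rcases (Polynomial.prime_X_sub_C mu).irreducible.coprime_iff_not_dvd.2 hnd with h
    exact h
  have hcop2 : IsCoprime (x ^ (k + q + 1)) r := hcop.pow_left
  obtain ⟨u, v, huv⟩ := hcop2
  refine ⟨v * r, ⟨?_, ?_⟩, ⟨m + 1, ?_⟩, ⟨u * x ^ (q + 1), ?_⟩⟩
  · intro y hy
    have e : v * r = 1 - u * x ^ (k + 1) * x ^ q := by rw [← huv]; ring
    rw [e, map_sub, map_mul, map_pow _ x q, hx, hAx, map_one, Matrix.sub_mulVec,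
      ← Matrix.mulVec_mulVec, hy]
    simp
  · intro nu hnu y hy
    have hc : IsCoprime (x ^ m) ((Polynomial.X - Polynomial.C nu) ^ q) := by
      refine IsCoprime.pow ?_
      exact Polynomial.isCoprime_X_sub_C_of_isUnit_sub (sub_ne_zero.2 hnu.symm).isUnit
    obtain ⟨c, d, hcd⟩ := hc
    have e : v * r = v * c * A.charpoly + v * r * d * (Polynomial.X - Polynomial.C nu) ^ q := by
      calc v * r = v * r * (c * x ^ m + d * (Polynomial.X - Polynomial.C nu) ^ q) := by
            rw [hcd, mul_one]
        _ = v * c * (x ^ m * r) + v * r * d * (Polynomial.X - Polynomial.C nu) ^ q := by ring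
        _ = _ := by rw [← hr]
    rw [e, map_add, map_mul _ _ A.charpoly, Matrix.aeval_self_charpoly, mul_zero, zero_add,
      map_mul, map_pow, hAx, ← Matrix.mulVec_mulVec, hy]
    simp
  · rw [← hAx mu, ← hx, ← map_mul, ← map_pow]
    have e : (x * (v * r)) ^ (m + 1) = x * v ^ (m + 1) * r ^ m * A.charpoly := by
      rw [hr]; ring
    rw [e, map_mul, Matrix.aeval_self_charpoly, mul_zero]
  · rw [← huv]; ring

lemma exists_nilIndex {q : ℕ} (A : Matrix (Fin q) (Fin q) ℂ) (mu : ℂ)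
    (P : Matrix (Fin q) (Fin q) ℂ) (h : ∃ m, ((A - mu • 1) * P) ^ m = 0) :
    ∃ ν, NilIndexOf A mu P ν := by
  classical
  have h' : ∃ m, ((A - mu • 1) * P) ^ (m + 1) = 0 := by
    obtain ⟨m, hm⟩ := h
    exact ⟨m, by rw [pow_succ, hm, zero_mul]⟩
  refine ⟨Nat.find h', Nat.find_spec h', ?_⟩
  rcases Nat.eq_zero_or_pos (Nat.find h') with h0 | h0
  · exact Or.inl h0
  · right
    have := Nat.find_min h' (m := Nat.find h' - 1) (by omega)
    rwa [Nat.sub_add_cancel h0] at this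

/-- Nilpotency of the transpose on generalized eigenvectors. -/
lemma transpose_nil {q : ℕ} (A : Matrix (Fin q) (Fin q) ℂ) (mu : ℂ) (ν : ℕ)
    (hν : ∀ (P' : Matrix (Fin q) (Fin q) ℂ) (ν' : ℕ), IsSpectralProj A mu P' →
      NilIndexOf A mu P' ν' → ν' ≤ ν) (k : ℕ) (l : Fin q → ℂ)
    (hl : ((Aᵀ - mu • 1) ^ k) *ᵥ l = 0) : ((Aᵀ - mu • 1) ^ (ν + 1)) *ᵥ l = 0 := by
  obtain ⟨p, hP, hnil, u, hu⟩ := exists_proj A mu k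
  obtain ⟨ν', hν'⟩ := exists_nilIndex A mu _ hnil
  have hle := hν _ _ hP hν'
  have hT : ((A - mu • 1) * Polynomial.aeval A p) ^ (ν + 1) = 0 := by
    obtain ⟨j, rfl⟩ := Nat.exists_eq_add_of_le hle
    rw [show ν' + j + 1 = (ν' + 1) + j by ring, pow_add, hν'.1, zero_mul]
  have hAx : Polynomial.aeval A (Polynomial.X - Polynomial.C mu) = A - mu • 1 := by
    simp [Algebra.algebraMap_eq_smul_one]
  have hcomm : Commute (A - mu • 1) (Polynomial.aeval A p) := by
    rw [← hAx]; exact (Commute.all _ _).map (Polynomial.aeval A)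
  have htr : (A - mu • 1)ᵀ = Aᵀ - mu • 1 := by simp
  rw [hcomm.mul_pow] at hT
  have hfix : (Polynomial.aeval A p)ᵀ *ᵥ l = l := by
    have : Polynomial.aeval A p = 1 - Polynomial.aeval A u * (A - mu • 1) ^ k := by
      have := congrArg (Polynomial.aeval A) hu
      rw [map_add, map_mul, map_pow, hAx, map_one] at this
      exact eq_sub_of_add_eq' this
    have hc2 : Commute (Polynomial.aeval A u) ((A - mu • 1) ^ k) := by
      rw [← hAx, ← map_pow]; exact (Commute.all _ _).map (Polynomial.aeval A)
    rw [this, hc2.eq, Matrix.transpose_sub, Matrix.transpose_mul, Matrix.transpose_pow, htr,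
      Matrix.sub_mulVec, ← Matrix.mulVec_mulVec, hl]
    simp
  have hfixn : ∀ j : ℕ, ((Polynomial.aeval A p)ᵀ ^ j) *ᵥ l = l := by
    intro j
    induction j with
    | zero => simp
    | succ j ih => rw [pow_succ, ← Matrix.mulVec_mulVec, hfix, ih]
  have hT' := congrArg Matrix.transpose (hcomm.pow_pow (ν + 1) (ν + 1)).eq
  rw [hT] at hT'
  rw [Matrix.transpose_mul, Matrix.transpose_pow, Matrix.transpose_pow, htr,
    Matrix.transpose_zero] at hT'
  calc ((Aᵀ - mu • 1) ^ (ν + 1)) *ᵥ l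
      = ((Aᵀ - mu • 1) ^ (ν + 1)) *ᵥ (((Polynomial.aeval A p)ᵀ ^ (ν + 1)) *ᵥ l) := by rw [hfixn]
    _ = 0 := by rw [Matrix.mulVec_mulVec, ← hT', Matrix.zero_mulVec]

lemma toLin_pow_apply {q : ℕ} (B : Matrix (Fin q) (Fin q) ℂ) (mu : ℂ) (k : ℕ) (l : Fin q → ℂ) :
    ((Matrix.toLin' B - mu • (1 : Module.End ℂ (Fin q → ℂ))) ^ k) l = ((B - mu • 1) ^ k) *ᵥ l := by
  rw [← Matrix.toLin'_apply, Matrix.toLin'_pow]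
  congr 2
  simp [Module.End.one_eq_id]

lemma mem_second_or {q : ℕ} (A : Matrix (Fin q) (Fin q) ℂ) (b : ℝ) (mu : ℂ) (k : ℕ)
    (l : Fin q → ℂ) (hl0 : l ≠ 0) (hl : ((Aᵀ - mu • 1) ^ k) *ᵥ l = 0) (hmu : mu ≠ b) :
    MemSecondEigSet A b mu := by
  refine Or.inl ⟨hmu, ?_⟩
  by_contra hns
  have h1 : IsUnit (algebraMap ℂ (Matrix (Fin q) (Fin q) ℂ) mu - A) := by
    rwa [spectrum.notMem_iff] at hns
  have h2 : IsUnit (A - mu • 1) := by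
    rw [← neg_sub]
    rw [← Algebra.algebraMap_eq_smul_one]
    exact h1.neg
  have h3 : IsUnit (Aᵀ - mu • 1) := by
    have : Aᵀ - mu • 1 = (A - mu • 1)ᵀ := by simp
    rw [this]
    exact (Matrix.isUnit_transpose _).2 h2
  apply hl0
  have h4 := Matrix.mulVec_injective_of_isUnit (h3.pow k)
  apply h4
  rw [hl]; simp

lemma gen_b {q : ℕ} (A : Matrix (Fin q) (Fin q) ℂ) (b : ℂ)
    (hmult : Polynomial.rootMultiplicity b A.charpoly ≤ 1) (a : Fin q → ℂ) (ha : a ≠ 0)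
    (hab : Aᵀ *ᵥ a = b • a) (l : Fin q → ℂ)
    (hl : l ∈ Module.End.maxGenEigenspace (Matrix.toLin' Aᵀ) b) : ∃ c : ℂ, l = c • a := by
  have hfin : Module.finrank ℂ (Module.End.maxGenEigenspace (Matrix.toLin' Aᵀ) b) ≤ 1 := by
    rw [LinearMap.finrank_maxGenEigenspace_eq]
    rw [Matrix.charpoly_toLin', Matrix.charpoly_transpose]
    exact hmult
  have hamem : a ∈ Module.End.maxGenEigenspace (Matrix.toLin' Aᵀ) b := by
    rw [Module.End.mem_maxGenEigenspace]
    refine ⟨1, ?_⟩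
    rw [toLin_pow_apply, pow_one, Matrix.sub_mulVec, hab, Matrix.smul_mulVec, Matrix.one_mulVec,
      sub_self]
  have h1 : Module.finrank ℂ (Module.End.maxGenEigenspace (Matrix.toLin' Aᵀ) b) = 1 := by
    refine le_antisymm hfin ?_
    rw [Nat.one_le_iff_ne_zero]
    intro h0
    rw [Submodule.finrank_eq_zero] at h0
    rw [h0] at hamem
    exact ha (by simpa using hamem)
  have := (finrank_eq_one_iff_of_nonzero' (⟨a, hamem⟩ : Module.End.maxGenEigenspace
    (Matrix.toLin' Aᵀ) b) (by simpa [Subtype.ext_iff] using ha)).1 h1 ⟨l, hl⟩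
  obtain ⟨c, hc⟩ := this
  exact ⟨c, by simpa using (congrArg Subtype.val hc).symm⟩

/-- Abstract bound for all linear functionals. -/
lemma abstract_bound {q : ℕ} (A : Matrix (Fin q) (Fin q) ℂ) {b w0 : ℝ} (hb : 0 < b) (hw0 : 0 < w0)
    (a : Fin q → ℂ) (ha : a ≠ 0) (hab : Aᵀ *ᵥ a = (b : ℂ) • a) (ν : ℕ)
    (h2max : ∀ mu : ℂ, MemSecondEigSet A b mu → mu.re ≤ b / 2)
    (hν2max : ∀ (mu : ℂ) (P' : Matrix (Fin q) (Fin q) ℂ) (ν' : ℕ),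
      MemSecondEigSet A b mu → mu.re = b / 2 →
      IsSpectralProj A mu P' → NilIndexOf A mu P' ν' → ν' ≤ ν)
    (s : (Fin q → ℂ) → ℕ → ℝ) (hs : ∀ l n, 0 ≤ s l n)
    (hadd : ∀ l l' n, s (l + l') n ≤ s l n + s l' n)
    (hsmul : ∀ (c : ℂ) l n, s (c • l) n = ‖c‖ * s l n)
    (hsa : ∀ n, s a n = 0)
    (hrec : ∀ (mu : ℂ) (l : Fin q → ℂ), ∃ C : ℝ, ∀ n : ℕ, s l (n + 1) ^ 2 ≤
      (‖1 + mu / ((w0 + n * b : ℝ) : ℂ)‖ * s l n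
        + s ((Aᵀ - mu • 1) *ᵥ l) n / (w0 + n * b)) ^ 2 + C) (l : Fin q → ℂ) :
    ∃ D : ℝ, 0 ≤ D ∧ ∀ n : ℕ, s l n ^ 2 ≤ D * ((w0 + n * b) * Lseq w0 b n ^ (2 * ν + 1)) := by
  have hs0 : ∀ n, s 0 n = 0 := fun n => by simpa using hsmul 0 0 n
  have hw : ∀ n : ℕ, 0 < w0 + n * b := fun n => by positivity
  have hL := one_le_Lseq hb hw0
  have hpos : ∀ n : ℕ, 0 ≤ (w0 + n * b) * Lseq w0 b n ^ (2 * ν + 1) := fun n =>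
    (mul_pos (hw n) (pow_pos (by linarith [hL n]) _)).le
  have hsub : ∀ mu : ℂ, mu.re < b / 2 → ∀ (k : ℕ) (l : Fin q → ℂ),
      ((Aᵀ - mu • 1) ^ k) *ᵥ l = 0 → ∃ D : ℝ, 0 ≤ D ∧ ∀ n : ℕ, s l n ^ 2 ≤ D * (w0 + n * b) := by
    intro mu hmu k
    induction k with
    | zero =>
      intro l hl
      have : l = 0 := by simpa using hl
      subst this
      exact ⟨0, le_rfl, fun n => by simp [hs0]⟩
    | succ k ih =>
      intro l hl
      rw [pow_succ, ← Matrix.mulVec_mulVec] at hl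
      obtain ⟨G, hG, hg⟩ := ih _ hl
      obtain ⟨C, hC⟩ := hrec mu l
      exact rec_sub hb hw0 hmu hg hC
  have hcrit : ∀ mu : ℂ, mu.re = b / 2 → ∀ (k : ℕ) (l : Fin q → ℂ),
      ((Aᵀ - mu • 1) ^ (k + 1)) *ᵥ l = 0 → ∃ D : ℝ, 0 ≤ D ∧ ∀ n : ℕ,
        s l n ^ 2 ≤ D * ((w0 + n * b) * Lseq w0 b n ^ (2 * k + 1)) := by
    intro mu hmu k
    induction k with
    | zero =>
      intro l hl
      obtain ⟨C, hC⟩ := hrec mu l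
      rw [zero_add, pow_one] at hl
      simp only [hl, hs0, zero_div, add_zero] at hC
      simpa using rec_crit_zero hb hw0 hmu hC
    | succ k ih =>
      intro l hl
      rw [pow_succ, ← Matrix.mulVec_mulVec] at hl
      obtain ⟨G, hG, hg⟩ := ih _ hl
      obtain ⟨C, hC⟩ := hrec mu l
      exact rec_crit_core hb hw0 hmu k hg hC
  let V : Submodule ℂ (Fin q → ℂ) :=
    { carrier := {l | ∃ D : ℝ, 0 ≤ D ∧ ∀ n : ℕ,
        s l n ^ 2 ≤ D * ((w0 + n * b) * Lseq w0 b n ^ (2 * ν + 1))}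
      add_mem' := by
        rintro l l' ⟨D, hD, h⟩ ⟨D', hD', h'⟩
        refine ⟨2 * D + 2 * D', by positivity, fun n => ?_⟩
        have h1 := hadd l l' n
        have h2 := hs (l + l') n
        have h3 : s (l + l') n ^ 2 ≤ (s l n + s l' n) ^ 2 := by gcongr
        nlinarith [h n, h' n, sq_nonneg (s l n - s l' n)]
      zero_mem' := ⟨0, le_rfl, fun n => by simp [hs0]⟩
      smul_mem' := by
        rintro c l ⟨D, hD, h⟩
        refine ⟨‖c‖ ^ 2 * D, by positivity, fun n => ?_⟩
        rw [hsmul, mul_pow, mul_assoc]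
        gcongr
        exact h n }
  suffices hV : V = ⊤ by
    have : l ∈ V := by rw [hV]; trivial
    exact this
  rw [eq_top_iff, ← Module.End.iSup_maxGenEigenspace_eq_top (Matrix.toLin' Aᵀ)]
  refine iSup_le fun mu l hl => ?_
  by_cases hl0 : l = 0
  · rw [hl0]; exact V.zero_mem
  by_cases hmu : mu = b
  · subst hmu
    have hmult : Polynomial.rootMultiplicity (b : ℂ) A.charpoly ≤ 1 := by
      by_contra h
      push Not at h
      have := h2max b (Or.inr ⟨rfl, h⟩)
      rw [Complex.ofReal_re] at this
      linarith
    obtain ⟨c, rfl⟩ := gen_b A b hmult a ha hab l hl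
    exact ⟨0, le_rfl, fun n => by simp [hsmul, hsa]⟩
  · rw [Module.End.mem_maxGenEigenspace] at hl
    obtain ⟨k, hk⟩ := hl
    rw [toLin_pow_apply] at hk
    have hsec := mem_second_or A b mu k l hl0 hk hmu
    rcases (h2max mu hsec).lt_or_eq with h | h
    · obtain ⟨D, hD, hh⟩ := hsub mu h k l hk
      refine ⟨D, hD, fun n => (hh n).trans ?_⟩
      gcongr
      exact le_mul_of_one_le_right (hw n).le (one_le_pow₀ (hL n))
    · have := transpose_nil A mu ν (fun P' ν' => hν2max mu P' ν' hsec h) k l hk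
      exact hcrit mu h ν l this

lemma lpNorm_clm_le {Ω : Type*} {m0 : MeasurableSpace Ω} {μ : Measure Ω} {E F : Type*}
    [NormedAddCommGroup E] [NormedSpace ℝ E] [NormedAddCommGroup F] [NormedSpace ℝ F]
    {p : ENNReal} (T : E →L[ℝ] F) {g : Ω → E} (hg : MemLp g p μ) :
    lpNorm (fun ω => T (g ω)) p μ ≤ ‖T‖ * lpNorm g p μ := by
  have h1 : MemLp (fun ω => ‖T‖ * ‖g ω‖) p μ := hg.norm.const_mul _
  refine (lpNorm_mono_real h1 (fun ω => T.le_opNorm _)).trans ?_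
  have h2 := lpNorm_const_smul (p := p) ‖T‖ (fun ω => ‖g ω‖) μ
  have h3 : (fun ω => ‖T‖ * ‖g ω‖) = ‖T‖ • (fun ω => ‖g ω‖) := rfl
  rw [h3, h2, lpNorm_norm hg.1]
  simp

lemma xi_bound {Ω : Type*} {m0 : MeasurableSpace Ω} {μ : Measure Ω} [IsProbabilityMeasure μ]
    {E : Type*} [NormedAddCommGroup E] [NormedSpace ℝ E] (T : E →L[ℝ] E)
    {p : ENNReal} (hp : 1 ≤ p) (X : ℕ → Ω → E) (hX : ∀ n, AEStronglyMeasurable (X n) μ)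
    (x₀ : E) (hX0 : X 0 = fun _ => x₀)
    (hsup : (⨆ n : ℕ, eLpNorm (fun ω => X (n + 1) ω - X n ω) p μ) < ⊤)
    {b w0 : ℝ} (hb : 0 < b) (hw0 : 0 < w0) :
    (∀ n, MemLp (X n) p μ) ∧ ∃ M, 0 ≤ M ∧ ∀ n : ℕ,
      lpNorm (fun ω => X (n + 1) ω - X n ω - (w0 + n * b)⁻¹ • T (X n ω)) p μ ≤ M := by
  set M := (⨆ n : ℕ, eLpNorm (fun ω => X (n + 1) ω - X n ω) p μ).toReal with hM
  have hM0 : 0 ≤ M := ENNReal.toReal_nonneg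
  have hle : ∀ n, eLpNorm (fun ω => X (n + 1) ω - X n ω) p μ ≤
      ⨆ n : ℕ, eLpNorm (fun ω => X (n + 1) ω - X n ω) p μ := fun n =>
    le_iSup (fun n : ℕ => eLpNorm (fun ω => X (n + 1) ω - X n ω) p μ) n
  have hinc : ∀ n, MemLp (fun ω => X (n + 1) ω - X n ω) p μ := fun n =>
    ⟨(hX _).sub (hX _), (hle n).trans_lt hsup⟩
  have hincb : ∀ n, lpNorm (fun ω => X (n + 1) ω - X n ω) p μ ≤ M := fun n => by
    rw [← toReal_eLpNorm (hinc n).1]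
    exact ENNReal.toReal_mono hsup.ne (hle n)
  have hmem : ∀ n, MemLp (X n) p μ := by
    intro n
    induction n with
    | zero => rw [hX0]; exact memLp_const _
    | succ n ih =>
      have : X (n + 1) = (fun ω => X n ω + (X (n + 1) ω - X n ω)) := by ext ω; simp
      rw [this]
      exact ih.add (hinc n)
  have hXb : ∀ n : ℕ, lpNorm (X n) p μ ≤ ‖x₀‖ + n * M := by
    intro n
    induction n with
    | zero =>
      rw [hX0, lpNorm_const (by positivity) (IsProbabilityMeasure.ne_zero μ)]
      simp
    | succ n ih =>
      have : X (n + 1) = X n + (fun ω => (X (n + 1) ω - X n ω)) := by ext ω; simp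
      rw [this]
      refine (lpNorm_add_le (hmem n) hp).trans ?_
      push_cast
      linarith [hincb n]
  refine ⟨hmem, M + ‖T‖ * (‖x₀‖ / w0 + M / b), by positivity, fun n => ?_⟩
  have hw : 0 < w0 + n * b := by positivity
  have h1 := lpNorm_sub_le (hinc n) hp (g := fun ω => (w0 + n * b)⁻¹ • T (X n ω))
  refine h1.trans (add_le_add (hincb n) ?_)
  have h2 := lpNorm_const_smul (p := p) ((w0 + n * b)⁻¹) (fun ω => T (X n ω)) μ
  have h3 : (fun ω => (w0 + n * b)⁻¹ • T (X n ω)) = (w0 + n * b)⁻¹ • (fun ω => T (X n ω)) := rfl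
  rw [h3, h2]
  have h4 : ((‖(w0 + n * b)⁻¹‖₊ : NNReal) : ℝ) = (w0 + n * b)⁻¹ := by
    rw [coe_nnnorm, Real.norm_of_nonneg (by positivity)]
  rw [h4]
  have h5 := (lpNorm_clm_le T (hmem n)).trans (mul_le_mul_of_nonneg_left (hXb n) (norm_nonneg T))
  calc (w0 + n * b)⁻¹ * lpNorm (fun ω => T (X n ω)) p μ
      ≤ (w0 + n * b)⁻¹ * (‖T‖ * (‖x₀‖ + n * M)) := by gcongr
    _ = ‖T‖ * (‖x₀‖ / (w0 + n * b) + n * M / (w0 + n * b)) := by field_simp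
    _ ≤ ‖T‖ * (‖x₀‖ / w0 + M / b) := by
        gcongr ‖T‖ * (?_ + ?_)
        · gcongr; nlinarith [mul_nonneg (Nat.cast_nonneg (α := ℝ) n) hb.le]
        · rw [div_le_div_iff₀ hw hb]
          nlinarith [mul_nonneg hM0 hw0.le]

/-- linear functional with complex coefficients -/
noncomputable def phiL {q : ℕ} (l : Fin q → ℂ) : EuclideanSpace ℝ (Fin q) →L[ℝ] ℂ :=
  LinearMap.toContinuousLinearMap
    { toFun := fun x => ∑ j, l j * ((x j : ℝ) : ℂ)
      map_add' := fun x y => by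
        simp only [PiLp.add_apply, Complex.ofReal_add, mul_add, Finset.sum_add_distrib]
      map_smul' := fun c x => by
        simp only [PiLp.smul_apply, smul_eq_mul, Complex.ofReal_mul, RingHom.id_apply,
          Complex.real_smul, Finset.mul_sum]
        refine Finset.sum_congr rfl fun j _ => by ring }

lemma phiL_apply {q : ℕ} (l : Fin q → ℂ) (x : EuclideanSpace ℝ (Fin q)) :
    phiL l x = ∑ j, l j * ((x j : ℝ) : ℂ) := rfl

lemma phiL_add {q : ℕ} (l l' : Fin q → ℂ) (x : EuclideanSpace ℝ (Fin q)) :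
    phiL (l + l') x = phiL l x + phiL l' x := by
  simp [phiL_apply, add_mul, Finset.sum_add_distrib]

lemma phiL_smul {q : ℕ} (c : ℂ) (l : Fin q → ℂ) (x : EuclideanSpace ℝ (Fin q)) :
    phiL (c • l) x = c * phiL l x := by
  simp [phiL_apply, Finset.mul_sum, mul_assoc]

lemma phiL_A {q : ℕ} (A : Matrix (Fin q) (Fin q) ℝ) (l : Fin q → ℂ)
    (x : EuclideanSpace ℝ (Fin q)) :
    phiL l (Matrix.toEuclideanCLM (𝕜 := ℝ) A x) =
      phiL ((A.map (fun x : ℝ => (x : ℂ)))ᵀ *ᵥ l) x := by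
  simp only [phiL_apply, ofLp_toEuclideanCLM, Matrix.mulVec, dotProduct, Matrix.transpose_apply,
    Matrix.map_apply, Complex.ofReal_sum, Complex.ofReal_mul, Finset.mul_sum, Finset.sum_mul]
  rw [Finset.sum_comm]
  refine Finset.sum_congr rfl fun j _ => Finset.sum_congr rfl fun i _ => by ring

lemma process_bound
    (q : ℕ) {Ω : Type} {m0 : MeasurableSpace Ω}
    (μ : Measure Ω) [IsProbabilityMeasure μ] (ℱ : Filtration ℕ m0)
    (a : Fin q → ℝ) (b : ℝ) (hb : 0 < b)
    (A : Matrix (Fin q) (Fin q) ℝ) (hA : Matrix.vecMul a A = b • a)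
    (X : ℕ → Ω → EuclideanSpace ℝ (Fin q)) (hadp : Adapted ℱ X)
    (hXint : ∀ n, Integrable (X n) μ)
    (x₀ : EuclideanSpace ℝ (Fin q)) (hX0 : X 0 = fun _ => x₀)
    (w0 : ℝ) (hw₀ : 0 < w0) (ha0 : a ≠ 0)
    (hwn : ∀ n : ℕ, ∀ᵐ ω ∂μ, ∑ j, a j * X n ω j = w0 + (n : ℝ) * b)
    (hcond : ∀ n : ℕ, μ[fun ω => X (n + 1) ω - X n ω | ℱ n] =ᵐ[μ]
      fun ω => (w0 + (n : ℝ) * b)⁻¹ • (Matrix.toEuclideanCLM (𝕜 := ℝ) A (X n ω)))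
    (hmom : ∀ p : ℝ, 2 ≤ p →
      (⨆ n : ℕ, eLpNorm (fun ω => X (n + 1) ω - X n ω) (ENNReal.ofReal p) μ) < ⊤)
    (h2max : ∀ mu : ℂ, MemSecondEigSet (A.map (fun x : ℝ => (x : ℂ))) b mu → mu.re ≤ b / 2)
    (ν₂ : ℕ)
    (hν2max : ∀ (mu : ℂ) (P' : Matrix (Fin q) (Fin q) ℂ) (ν' : ℕ),
      MemSecondEigSet (A.map (fun x : ℝ => (x : ℂ))) b mu → mu.re = b / 2 →
      IsSpectralProj (A.map (fun x : ℝ => (x : ℂ))) mu P' →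
      NilIndexOf (A.map (fun x : ℝ => (x : ℂ))) mu P' ν' → ν' ≤ ν₂)
    (m : ℕ) (hm : 1 ≤ m) :
    (∀ n, MemLp (fun ω => X n ω - ∫ ω', X n ω' ∂μ) (2 * m + 2 : ℕ) μ) ∧
    ∃ D : ℝ, 0 ≤ D ∧ ∀ n : ℕ, 2 ≤ n →
      lpNorm (fun ω => X n ω - ∫ ω', X n ω' ∂μ) (2 * m + 2 : ℕ) μ ^ 2 ≤
        D * ((n : ℝ) * Real.log n ^ (2 * ν₂ + 1)) := by
  classical
  set T := Matrix.toEuclideanCLM (𝕜 := ℝ) A with hT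
  set Ac := A.map (fun x : ℝ => (x : ℂ)) with hAc
  have hp1 : (1 : ENNReal) ≤ ((2 * m + 2 : ℕ) : ENNReal) := by norm_cast; omega
  have hmom' : (⨆ n : ℕ, eLpNorm (fun ω => X (n + 1) ω - X n ω) (2 * m + 2 : ℕ) μ) < ⊤ := by
    have := hmom ((2 * m + 2 : ℕ) : ℝ) (by push_cast; nlinarith [Nat.cast_nonneg (α := ℝ) m])
    rwa [ENNReal.ofReal_natCast] at this
  obtain ⟨hXmem, M, hM0, hξb⟩ := xi_bound T hp1 X (fun n => (hXint n).1) x₀ hX0 hmom' hb hw₀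
  set w : ℕ → ℝ := fun n => w0 + n * b with hw
  have hwpos : ∀ n, 0 < w n := fun n => by simp only [hw]; positivity
  set ξ : ℕ → Ω → EuclideanSpace ℝ (Fin q) :=
    fun n ω => X (n + 1) ω - X n ω - (w n)⁻¹ • T (X n ω) with hξ
  set Y : ℕ → Ω → EuclideanSpace ℝ (Fin q) := fun n ω => X n ω - ∫ ω', X n ω' ∂μ with hY
  have hTX : ∀ n, MemLp (fun ω => (w n)⁻¹ • T (X n ω)) (2 * m + 2 : ℕ) μ := fun n =>
    (T.comp_memLp' (hXmem n)).const_smul (w n)⁻¹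
  have hξmem : ∀ n, MemLp (ξ n) (2 * m + 2 : ℕ) μ := fun n =>
    ((hXmem (n + 1)).sub (hXmem n)).sub (hTX n)
  have hYmem : ∀ n, MemLp (Y n) (2 * m + 2 : ℕ) μ := fun n => (hXmem n).sub (memLp_const _)
  have hXsm : ∀ n, StronglyMeasurable[ℱ n] (X n) := fun n => (hadp n).stronglyMeasurable
  have hYsm : ∀ n, StronglyMeasurable[ℱ n] (Y n) := fun n =>
    (hXsm n).sub stronglyMeasurable_const
  have hξcond : ∀ n, μ[ξ n | ℱ n] =ᵐ[μ] 0 := by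
    intro n
    have h1 := condExp_sub (m := ℱ n) ((hXint (n + 1)).sub (hXint n)) ((hTX n).integrable hp1)
    have h2 : μ[fun ω => (w n)⁻¹ • T (X n ω) | ℱ n] = fun ω => (w n)⁻¹ • T (X n ω) :=
      condExp_of_stronglyMeasurable (ℱ.le n)
        ((T.continuous.comp_stronglyMeasurable (hXsm n)).const_smul (w n)⁻¹) ((hTX n).integrable hp1)
    refine h1.trans ?_
    rw [h2]
    filter_upwards [hcond n] with ω hω
    have : μ[X (n + 1) - X n | ℱ n] ω = (w n)⁻¹ • T (X n ω) := hω
    simp [this]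
  have hmean : ∀ n, ∫ ω', X (n + 1) ω' ∂μ =
      ∫ ω', X n ω' ∂μ + (w n)⁻¹ • T (∫ ω', X n ω' ∂μ) := by
    intro n
    have h1 : ∫ ω, (X (n + 1) ω - X n ω) ∂μ = ∫ ω, (w n)⁻¹ • T (X n ω) ∂μ := by
      rw [← integral_condExp (ℱ.le n)]
      exact integral_congr_ae (hcond n)
    rw [integral_sub (hXint _) (hXint _), integral_smul, T.integral_comp_comm (hXint n)] at h1
    rw [← h1]; abel
  have hYrec : ∀ n ω, Y (n + 1) ω = (Y n ω + (w n)⁻¹ • T (Y n ω)) + ξ n ω := by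
    intro n ω
    simp only [hY, hξ, hmean n, map_sub, smul_sub]
    abel
  set s : (Fin q → ℂ) → ℕ → ℝ := fun l n => lpNorm (fun ω => phiL l (Y n ω)) (2 * m + 2 : ℕ) μ
    with hs
  have hφmem : ∀ l n, MemLp (fun ω => phiL l (Y n ω)) (2 * m + 2 : ℕ) μ := fun l n =>
    (phiL l).comp_memLp' (hYmem n)
  have hcs : ∀ (c : ℂ) (f : Ω → ℂ), lpNorm (fun ω => c * f ω) (2 * m + 2 : ℕ) μ =
      ‖c‖ * lpNorm f (2 * m + 2 : ℕ) μ := fun c f => by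
    have := lpNorm_const_smul (p := (2 * m + 2 : ℕ)) c f μ
    rw [← coe_nnnorm]; exact this
  obtain ⟨K, hK, hone⟩ := one_step (μ := μ) m hm
  have hbound : ∀ l : Fin q → ℂ, ∃ D, 0 ≤ D ∧ ∀ n : ℕ,
      s l n ^ 2 ≤ D * ((w0 + n * b) * Lseq w0 b n ^ (2 * ν₂ + 1)) := by
    refine abstract_bound Ac hb hw₀ (fun j => ((a j : ℝ) : ℂ)) ?_ ?_ ν₂ h2max hν2max s
      (fun _ _ => lpNorm_nonneg) ?_ ?_ ?_ ?_
    · intro h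
      apply ha0
      ext j
      have := congrFun h j
      simpa using this
    · ext j
      have := congrFun hA j
      simp only [Matrix.vecMul, dotProduct, Pi.smul_apply, smul_eq_mul] at this
      simp only [Matrix.mulVec, dotProduct, Matrix.transpose_apply, hAc, Matrix.map_apply,
        Pi.smul_apply, smul_eq_mul]
      rw [← Complex.ofReal_mul, ← this]
      push_cast
      exact Finset.sum_congr rfl fun i _ => by ring
    · intro l l' n
      have := lpNorm_add_le (hφmem l n) hp1 (g := fun ω => phiL l' (Y n ω))
      simp only [hs, phiL_add]
      exact this
    · intro c l n
      simp only [hs, phiL_smul]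
      exact hcs _ _
    · intro n
      have hne : ((2 * m + 2 : ℕ) : ENNReal) ≠ 0 := by norm_cast
      rw [hs]
      refine (lpNorm_eq_zero (hφmem _ n) hne).2 ?_
      have h0 : ∀ᵐ ω ∂μ, phiL (fun j => ((a j : ℝ) : ℂ)) (X n ω) = ((w0 + n * b : ℝ) : ℂ) := by
        filter_upwards [hwn n] with ω hω
        rw [← hω, phiL_apply]
        push_cast
        rfl
      have h1 : phiL (fun j => ((a j : ℝ) : ℂ)) (∫ ω, X n ω ∂μ) = ((w0 + n * b : ℝ) : ℂ) := by
        rw [← ContinuousLinearMap.integral_comp_comm _ (hXint n), integral_congr_ae h0]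
        simp
      filter_upwards [h0] with ω hω
      simp only [hY, map_sub, hω, h1, sub_self, Pi.zero_apply]
    · intro mu l
      refine ⟨K * (‖phiL l‖ * M) ^ 2, fun n => ?_⟩
      set F : Ω → ℂ := fun ω => phiL l (Y n ω + (w n)⁻¹ • T (Y n ω)) with hF
      set G : Ω → ℂ := fun ω => phiL l (ξ n ω) with hG
      have hFm : MemLp F (2 * m + 2 : ℕ) μ :=
        (phiL l).comp_memLp' ((hYmem n).add ((T.comp_memLp' (hYmem n)).const_smul (w n)⁻¹))
      have hGm : MemLp G (2 * m + 2 : ℕ) μ := (phiL l).comp_memLp' (hξmem n)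
      have hFs : StronglyMeasurable[ℱ n] F :=
        (phiL l).continuous.comp_stronglyMeasurable
          ((hYsm n).add ((T.continuous.comp_stronglyMeasurable (hYsm n)).const_smul (w n)⁻¹))
      have hGc : μ[G | ℱ n] =ᵐ[μ] 0 := by
        have h1 := ContinuousLinearMap.comp_condExp_comm (m := ℱ n)
          ((hξmem n).integrable hp1) (phiL l)
        refine h1.symm.trans ?_
        filter_upwards [hξcond n] with ω hω
        simp [hω]
      obtain ⟨hi, h0⟩ := cond_orth (ℱ.le n) m hFs hFm hGm hGc
      have hstep := hone F G hFm hGm hi h0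
      have e1 : s l (n + 1) = lpNorm (fun ω => F ω + G ω) (2 * m + 2 : ℕ) μ := by
        simp only [hs, hF, hG, hYrec, map_add]
      have hGb : lpNorm G (2 * m + 2 : ℕ) μ ≤ ‖phiL l‖ * M :=
        (lpNorm_clm_le (phiL l) (hξmem n)).trans
          (mul_le_mul_of_nonneg_left (hξb n) (norm_nonneg _))
      have hFeq : F = (fun ω => (1 + mu / ((w0 + n * b : ℝ) : ℂ)) * phiL l (Y n ω)) +
          (fun ω => (((w0 + n * b : ℝ) : ℂ))⁻¹ * phiL ((Acᵀ - mu • 1) *ᵥ l) (Y n ω)) := by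
        ext ω
        have hl : phiL ((Acᵀ - mu • 1) *ᵥ l) (Y n ω) =
            phiL (Acᵀ *ᵥ l) (Y n ω) - mu * phiL l (Y n ω) := by
          rw [Matrix.sub_mulVec, Matrix.smul_mulVec, Matrix.one_mulVec, sub_eq_add_neg,
            ← neg_smul, phiL_add, phiL_smul]
          ring
        simp only [hF, Pi.add_apply, map_add, map_smul, hT, phiL_A, hl,
          Complex.real_smul, hw, ← hAc]
        push_cast
        ring
      have hFb : lpNorm F (2 * m + 2 : ℕ) μ ≤ ‖1 + mu / ((w0 + n * b : ℝ) : ℂ)‖ * s l n +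
          s ((Acᵀ - mu • 1) *ᵥ l) n / (w0 + n * b) := by
        rw [hFeq]
        refine (lpNorm_add_le ((hφmem l n).const_mul _) hp1).trans ?_
        rw [hcs, hcs, norm_inv, Complex.norm_real, Real.norm_of_nonneg (hwpos n).le]
        apply le_of_eq
        rw [div_eq_inv_mul (s ((Acᵀ - mu • 1) *ᵥ l) n)]
      rw [e1]
      refine hstep.trans (add_le_add ?_ ?_)
      · exact pow_le_pow_left₀ lpNorm_nonneg hFb 2
      · exact mul_le_mul_of_nonneg_left (pow_le_pow_left₀ lpNorm_nonneg hGb 2) hK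
  refine ⟨hYmem, ?_⟩
  choose D hD hDb using fun i : Fin q => hbound (Pi.single i 1)
  obtain ⟨K2, hK2, hL⟩ := Lseq_le_log (w0 := w0) (b := b) hb hw₀
  set S : ℝ := ∑ i, Real.sqrt (D i) with hS
  have hS0 : 0 ≤ S := Finset.sum_nonneg fun i _ => Real.sqrt_nonneg _
  refine ⟨S ^ 2 * ((w0 + b) * K2 ^ (2 * ν₂ + 1)), by positivity, fun n hn => ?_⟩
  have hn1 : (1 : ℝ) ≤ n := by exact_mod_cast (by omega : 1 ≤ n)
  have hlog : 0 ≤ Real.log n := Real.log_nonneg hn1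
  have hL0 : 0 ≤ Lseq w0 b n := by linarith [one_le_Lseq hb hw₀ n]
  set V : ℝ := (w0 + n * b) * Lseq w0 b n ^ (2 * ν₂ + 1) with hV
  have hV0 : 0 ≤ V := mul_nonneg (hwpos n).le (by positivity)
  have hsi : ∀ i, s (Pi.single i 1) n ≤ Real.sqrt (D i) * Real.sqrt V := by
    intro i
    rw [← Real.sqrt_mul (hD i)]
    exact Real.le_sqrt_of_sq_le (hDb i n)
  have hYn : lpNorm (Y n) (2 * m + 2 : ℕ) μ ≤ ∑ i, s (Pi.single i 1) n := by
    have hg : MemLp (∑ i : Fin q, fun ω => ‖phiL (Pi.single i 1) (Y n ω)‖) (2 * m + 2 : ℕ) μ :=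
      memLp_finsetSum' _ fun i _ => (hφmem _ n).norm
    have hle : ∀ ω, ‖Y n ω‖ ≤ (∑ i : Fin q, fun ω => ‖phiL (Pi.single i 1) (Y n ω)‖) ω := by
      intro ω
      have h1 : ∀ i, phiL (Pi.single i 1) (Y n ω) = ((Y n ω i : ℝ) : ℂ) := by
        intro i
        simp [phiL_apply, Pi.single_apply]
      simp only [Finset.sum_apply, h1, Complex.norm_real]
      have h2 : Y n ω = ∑ i, EuclideanSpace.single i (Y n ω i) := by
        ext j
        simp [Pi.single_apply]
      conv_lhs => rw [h2]
      refine (norm_sum_le _ _).trans ?_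
      simp
    refine (lpNorm_mono_real hg hle).trans ?_
    refine (lpNorm_sum_le (fun i _ => (hφmem _ n).norm) hp1).trans (le_of_eq ?_)
    exact Finset.sum_congr rfl fun i _ => lpNorm_norm (hφmem _ n).1 _
  have hYn2 : lpNorm (Y n) (2 * m + 2 : ℕ) μ ≤ S * Real.sqrt V := by
    refine hYn.trans ?_
    rw [hS, Finset.sum_mul]
    exact Finset.sum_le_sum fun i _ => hsi i
  have hVb : V ≤ ((w0 + b) * K2 ^ (2 * ν₂ + 1)) * ((n : ℝ) * Real.log n ^ (2 * ν₂ + 1)) := by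
    have h1 : w0 + n * b ≤ (w0 + b) * n := by nlinarith
    have h2 : Lseq w0 b n ^ (2 * ν₂ + 1) ≤ (K2 * Real.log n) ^ (2 * ν₂ + 1) :=
      pow_le_pow_left₀ hL0 (hL n hn) _
    calc V ≤ ((w0 + b) * n) * (K2 * Real.log n) ^ (2 * ν₂ + 1) := by
          rw [hV]
          exact mul_le_mul h1 h2 (by positivity) (by positivity)
      _ = _ := by rw [mul_pow]; ring
  calc lpNorm (Y n) (2 * m + 2 : ℕ) μ ^ 2 ≤ (S * Real.sqrt V) ^ 2 :=
        pow_le_pow_left₀ lpNorm_nonneg hYn2 2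
    _ = S ^ 2 * V := by rw [mul_pow, Real.sq_sqrt hV0]
    _ ≤ S ^ 2 * (((w0 + b) * K2 ^ (2 * ν₂ + 1)) * ((n : ℝ) * Real.log n ^ (2 * ν₂ + 1))) := by
        gcongr
    _ = _ := by ring

lemma trunc_bound (g M : ℝ) (hM : 0 < M) : |g - max (-M) (min M g)| ≤ g ^ 2 / M := by
  rw [le_div_iff₀ hM]
  rcases le_total M g with h | h
  · rw [min_eq_left h, max_eq_right (by linarith), abs_of_nonneg (by linarith)]
    nlinarith
  · rw [min_eq_right h]
    rcases le_total (-M) g with h' | h'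
    · rw [max_eq_right h']
      simp [sq_nonneg]
    · rw [max_eq_left h', abs_of_nonpos (by linarith)]
      nlinarith

lemma trunc_err {α : Type*} {mα : MeasurableSpace α} (P : Measure α) [IsProbabilityMeasure P]
    (K : ℝ) (h : α → ℝ) (hm : AEStronglyMeasurable h P) (hi : Integrable (fun x => h x ^ 2) P)
    (hb : ∫ x, h x ^ 2 ∂P ≤ K) (M : ℝ) (hM : 0 < M) :
    |∫ x, h x ∂P - ∫ x, max (-M) (min M (h x)) ∂P| ≤ K / M := by
  have hi1 : Integrable h P := by
    refine Integrable.mono' ((integrable_const (1 : ℝ)).add hi) hm (ae_of_all _ fun x => ?_)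
    simp only [Pi.add_apply, Real.norm_eq_abs]
    nlinarith [sq_abs (h x), sq_nonneg (|h x| - 1), abs_nonneg (h x)]
  have hi2 : Integrable (fun x => max (-M) (min M (h x))) P := by
    refine Integrable.of_bound (C := M) ?_ (ae_of_all _ fun x => ?_)
    · have hc : Continuous (fun t : ℝ => max (-M) (min M t)) := by fun_prop
      exact hc.comp_aestronglyMeasurable hm
    · rw [Real.norm_eq_abs, abs_le]
      exact ⟨le_max_left _ _, max_le (by linarith) (min_le_left _ _)⟩
  rw [← integral_sub hi1 hi2]
  refine (abs_integral_le_integral_abs).trans ?_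
  refine (integral_mono_of_nonneg (ae_of_all _ fun x => abs_nonneg _) (hi.div_const M)
    (ae_of_all _ fun x => trunc_bound _ _ hM)).trans ?_
  rw [integral_div]
  gcongr

lemma conv_of_sq_bound {Ω E : Type*} {m0 : MeasurableSpace Ω} {μ : Measure Ω}
    [IsProbabilityMeasure μ] [NormedAddCommGroup E] [MeasurableSpace E] [BorelSpace E]
    [SecondCountableTopology E]
    (ν : Measure E) [IsProbabilityMeasure ν] (Z : ℕ → Ω → E)
    (hZ : ∀ n, AEStronglyMeasurable (Z n) μ)
    (hconv : ∀ f : BoundedContinuousFunction E ℝ,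
      Tendsto (fun n : ℕ => ∫ ω, f (Z n ω) ∂μ) atTop (nhds (∫ x, f x ∂ν)))
    (g : E → ℝ) (hg : Continuous g) (K : ℝ)
    (hK : ∀ n ≥ 2, Integrable (fun ω => g (Z n ω) ^ 2) μ ∧ ∫ ω, g (Z n ω) ^ 2 ∂μ ≤ K) :
    Integrable (fun x => g x ^ 2) ν ∧
    Tendsto (fun n : ℕ => ∫ ω, g (Z n ω) ∂μ) atTop (nhds (∫ x, g x ∂ν)) := by
  have hK0 : 0 ≤ K := (integral_nonneg fun ω => sq_nonneg _).trans (hK 2 le_rfl).2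
  have hgZ : ∀ n, AEStronglyMeasurable (fun ω => g (Z n ω)) μ := fun n =>
    hg.comp_aestronglyMeasurable (hZ n)
  -- second moment of the limit
  have hk : ∀ k : ℕ, ∫⁻ x, ENNReal.ofReal (min (g x ^ 2) k) ∂ν ≤ ENNReal.ofReal K := by
    intro k
    have hc : Continuous (fun x => min (g x ^ 2) (k : ℝ)) := by fun_prop
    have hbd : ∀ x, ‖min (g x ^ 2) (k : ℝ)‖ ≤ k := fun x => by
      rw [Real.norm_of_nonneg (le_min (sq_nonneg _) (Nat.cast_nonneg k))]
      exact min_le_right _ _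
    have h1 := hconv (BoundedContinuousFunction.ofNormedAddCommGroup _ hc k hbd)
    simp only [BoundedContinuousFunction.coe_ofNormedAddCommGroup] at h1
    have h2 : ∫ x, min (g x ^ 2) (k : ℝ) ∂ν ≤ K := by
      refine le_of_tendsto h1 ?_
      filter_upwards [eventually_ge_atTop 2] with n hn
      refine le_trans (integral_mono_of_nonneg (ae_of_all _ fun ω => ?_) (hK n hn).1
        (ae_of_all _ fun ω => min_le_left _ _)) (hK n hn).2
      exact le_min (sq_nonneg _) (Nat.cast_nonneg k)
    rw [← ofReal_integral_eq_lintegral_ofReal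
      (Integrable.of_bound hc.aestronglyMeasurable k (ae_of_all _ hbd))
      (ae_of_all _ fun x => le_min (sq_nonneg _) (Nat.cast_nonneg k))]
    exact ENNReal.ofReal_le_ofReal h2
  have hlim : ∫⁻ x, ENNReal.ofReal (g x ^ 2) ∂ν ≤ ENNReal.ofReal K := by
    have h := lintegral_tendsto_of_tendsto_of_monotone (μ := ν)
      (f := fun (k : ℕ) x => ENNReal.ofReal (min (g x ^ 2) k))
      (F := fun x => ENNReal.ofReal (g x ^ 2))
      (fun k => by
        have hc : Continuous (fun x => min (g x ^ 2) (k : ℝ)) := by fun_prop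
        exact hc.measurable.ennreal_ofReal.aemeasurable)
      (ae_of_all _ fun x i j hij => ENNReal.ofReal_le_ofReal
        (min_le_min le_rfl (Nat.cast_le.2 hij)))
      (ae_of_all _ fun x => by
        refine tendsto_const_nhds.congr' ?_
        obtain ⟨N, hN⟩ := exists_nat_ge (g x ^ 2)
        filter_upwards [eventually_ge_atTop N] with k hk
        rw [min_eq_left (hN.trans (Nat.cast_le.2 hk))])
    exact le_of_tendsto' h hk
  have hIntg : Integrable (fun x => g x ^ 2) ν := by
    refine ⟨(hg.pow 2).aestronglyMeasurable, ?_⟩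
    rw [hasFiniteIntegral_iff_ofReal (ae_of_all _ fun x => sq_nonneg _)]
    exact hlim.trans_lt ENNReal.ofReal_lt_top
  have hle : ∫ x, g x ^ 2 ∂ν ≤ K := by
    rw [integral_eq_lintegral_of_nonneg_ae (ae_of_all _ fun x => sq_nonneg _) hIntg.1]
    exact ENNReal.toReal_le_of_le_ofReal hK0 hlim
  refine ⟨hIntg, ?_⟩
  rw [Metric.tendsto_atTop]
  intro ε hε
  set M : ℝ := 4 * (K + 1) / ε with hMdef
  have hM : 0 < M := by positivity
  have hKM : K / M < ε / 3 := by
    rw [hMdef, div_div_eq_mul_div, div_lt_div_iff₀ (by positivity) (by positivity)]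
    nlinarith
  have hc : Continuous (fun x => max (-M) (min M (g x))) := by fun_prop
  have hbd : ∀ x, ‖max (-M) (min M (g x))‖ ≤ M := fun x => by
    rw [Real.norm_eq_abs, abs_le]
    exact ⟨le_max_left _ _, max_le (by linarith) (min_le_left _ _)⟩
  have h1 := hconv (BoundedContinuousFunction.ofNormedAddCommGroup _ hc M hbd)
  simp only [BoundedContinuousFunction.coe_ofNormedAddCommGroup] at h1
  obtain ⟨N, hN⟩ := Metric.tendsto_atTop.1 h1 (ε / 3) (by positivity)
  refine ⟨max N 2, fun n hn => ?_⟩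
  have hn2 : 2 ≤ n := (le_max_right _ _).trans hn
  have e1 := hN n ((le_max_left _ _).trans hn)
  have e2 := trunc_err μ K (fun ω => g (Z n ω)) (hgZ n) (hK n hn2).1 (hK n hn2).2 M hM
  have e3 := trunc_err ν K g hg.aestronglyMeasurable hIntg hle M hM
  rw [Real.dist_eq] at e1 ⊢
  rw [abs_lt] at e1 ⊢
  rw [abs_le] at e2 e3
  constructor <;> linarith [e1.1, e1.2, e2.1, e2.2, e3.1, e3.2]

lemma conv_of_growth {Ω E : Type*} {m0 : MeasurableSpace Ω} {μ : Measure Ω}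
    [IsProbabilityMeasure μ] [NormedAddCommGroup E] [MeasurableSpace E] [BorelSpace E]
    [SecondCountableTopology E]
    (ν : Measure E) [IsProbabilityMeasure ν] (Z : ℕ → Ω → E)
    (hZ : ∀ n, AEStronglyMeasurable (Z n) μ)
    (hconv : ∀ f : BoundedContinuousFunction E ℝ,
      Tendsto (fun n : ℕ => ∫ ω, f (Z n ω) ∂μ) atTop (nhds (∫ x, f x ∂ν)))
    (hmom : ∀ m : ℕ, 1 ≤ m → ∃ K : ℝ, ∀ n ≥ 2,
      Integrable (fun ω => ‖Z n ω‖ ^ (2 * m + 2)) μ ∧ ∫ ω, ‖Z n ω‖ ^ (2 * m + 2) ∂μ ≤ K)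
    (g : E → ℝ) (hg : Continuous g) (N : ℕ) (hgN : ∀ x, |g x| ≤ 1 + ‖x‖ ^ N) :
    Tendsto (fun n : ℕ => ∫ ω, g (Z n ω) ∂μ) atTop (nhds (∫ x, g x ∂ν)) := by
  obtain ⟨K, hK⟩ := hmom (N + 1) (by omega)
  have hb : ∀ x, g x ^ 2 ≤ 4 + 2 * ‖x‖ ^ (2 * (N + 1) + 2) := by
    intro x
    have h1 : g x ^ 2 ≤ (1 + ‖x‖ ^ N) ^ 2 := by
      rw [← sq_abs]
      exact pow_le_pow_left₀ (abs_nonneg _) (hgN x) 2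
    have h2 : (‖x‖ ^ N) ^ 2 ≤ 1 + ‖x‖ ^ (2 * (N + 1) + 2) := by
      rw [← pow_mul]
      rcases le_total ‖x‖ 1 with h | h
      · have := pow_le_one₀ (n := N * 2) (norm_nonneg x) h
        have h' : 0 ≤ ‖x‖ ^ (2 * (N + 1) + 2) := by positivity
        linarith
      · have := pow_le_pow_right₀ h (show N * 2 ≤ 2 * (N + 1) + 2 by omega)
        linarith
    nlinarith [sq_nonneg (1 - ‖x‖ ^ N)]
  refine (conv_of_sq_bound ν Z hZ hconv g hg (4 + 2 * K) fun n hn => ?_).2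
  have hi : Integrable (fun ω => 4 + 2 * ‖Z n ω‖ ^ (2 * (N + 1) + 2)) μ :=
    (integrable_const _).add ((hK n hn).1.const_mul 2)
  refine ⟨?_, ?_⟩
  · refine hi.mono' ((hg.pow 2).comp_aestronglyMeasurable (hZ n)) (ae_of_all _ fun ω => ?_)
    rw [Real.norm_of_nonneg (sq_nonneg _)]
    exact hb _
  · refine (integral_mono_of_nonneg (ae_of_all _ fun ω => sq_nonneg _) hi
      (ae_of_all _ fun ω => hb _)).trans ?_
    rw [integral_add (integrable_const _) ((hK n hn).1.const_mul 2), integral_const_mul]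
    simp only [integral_const, probReal_univ, smul_eq_mul, one_mul]
    linarith [(hK n hn).2]

lemma gauss_cov {q : ℕ} (Sig : Matrix (Fin q) (Fin q) ℝ) (hSig : Sig.PosSemidef)
    (νlim : Measure (EuclideanSpace ℝ (Fin q)))
    (hGauss : ∀ l : Fin q → ℝ,
      Measure.map (fun x : EuclideanSpace ℝ (Fin q) => ∑ j, l j * x j) νlim =
        ProbabilityTheory.gaussianReal 0 (Real.toNNReal (∑ i, ∑ j, l i * Sig i j * l j)))
    (i j : Fin q) : ∫ x, x i * x j ∂νlim = Sig i j := by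
  classical
  have key : ∀ l : Fin q → ℝ, Integrable (fun x => (∑ j, l j * x j) ^ 2) νlim ∧
      ∫ x, (∑ j, l j * x j) ^ 2 ∂νlim = ∑ i, ∑ j, l i * Sig i j * l j := by
    intro l
    have hpos : 0 ≤ ∑ i, ∑ j, l i * Sig i j * l j := by
      have := hSig.dotProduct_mulVec_nonneg l
      simpa [dotProduct, Matrix.mulVec, Finset.mul_sum, mul_assoc] using this
    have hmeas : Measurable (fun x : EuclideanSpace ℝ (Fin q) => ∑ j, l j * x j) := by fun_prop
    have hm2 : MemLp id 2 (ProbabilityTheory.gaussianReal 0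
        (Real.toNNReal (∑ i, ∑ j, l i * Sig i j * l j))) :=
      ProbabilityTheory.memLp_id_gaussianReal 2
    have hi : Integrable (fun y : ℝ => y ^ 2) (ProbabilityTheory.gaussianReal 0
        (Real.toNNReal (∑ i, ∑ j, l i * Sig i j * l j))) := hm2.integrable_sq
    have hv := ProbabilityTheory.variance_id_gaussianReal (μ := 0)
      (v := Real.toNNReal (∑ i, ∑ j, l i * Sig i j * l j))
    rw [ProbabilityTheory.variance_eq_sub hm2] at hv
    simp only [id, ProbabilityTheory.integral_id_gaussianReal, Pi.pow_apply] at hv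
    rw [Real.coe_toNNReal _ hpos] at hv
    rw [← hGauss l] at hi hv
    rw [integrable_map_measure (by fun_prop) hmeas.aemeasurable] at hi
    rw [integral_map hmeas.aemeasurable (by fun_prop)] at hv
    refine ⟨hi, ?_⟩
    linarith
  have hsym : Sig j i = Sig i j := by
    have := hSig.isHermitian.apply i j
    simpa using this
  have hi := key (Pi.single i 1)
  have hj := key (Pi.single j 1)
  have hij := key (Pi.single i 1 + Pi.single j 1)
  simp only [Pi.single_apply, ite_mul, one_mul, zero_mul, Finset.sum_ite_eq', Finset.mem_univ,
    if_true, mul_ite, mul_one, mul_zero, Pi.add_apply, add_mul, mul_add,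
    Finset.sum_add_distrib] at hi hj hij
  have e : (fun x : EuclideanSpace ℝ (Fin q) => x i * x j) =
      fun x => ((x i + x j) ^ 2 - x i ^ 2 - x j ^ 2) / 2 := by
    ext x; ring
  have hd : Integrable (fun x : EuclideanSpace ℝ (Fin q) => (x i + x j) ^ 2 - x i ^ 2) νlim :=
    hij.1.sub hi.1
  rw [e, integral_div, integral_sub hd hj.1, integral_sub hij.1 hi.1]
  rw [hi.2, hj.2, hij.2]
  linarith

/-- Under the Pólya urn hypotheses, assume all moment conditions
(sup_n ‖X_{n+1} − X_n‖_p < ∞ for every p ≥ 2), that Re λ₂ = b/2 (λ₂ being the second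
eigenvalue in the stated ordering, λ₁ = b the largest, and ν₂ := ν_{λ₂} maximal among
the candidates with real part b/2), and that (X_n − E X_n)/√(n (log n)^{2ν₂+1}) converges
in distribution to the centered Gaussian law N(0, Σ) on ℝ^q (characterized by: every
linear image l·Z has the one-dimensional law N(0, l'Σl)). Then the convergence holds with
convergence of all moments: all absolute moments of order r ≥ 1 and all mixed moments
converge, and in particular Cov(X_n)/(n (log n)^{2ν₂+1}) → Σ entrywise. -/
theorem urn_critical_clt_moment_convergence
    (q : ℕ) (hq : 2 ≤ q) {Ω : Type} {m0 : MeasurableSpace Ω}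
    (μ : Measure Ω) [IsProbabilityMeasure μ] (ℱ : Filtration ℕ m0)
    (a : Fin q → ℝ) (b : ℝ) (hb : 0 < b)
    (A : Matrix (Fin q) (Fin q) ℝ) (hA : Matrix.vecMul a A = b • a)
    (X : ℕ → Ω → EuclideanSpace ℝ (Fin q)) (hadp : Adapted ℱ X)
    (hXint : ∀ n, Integrable (X n) μ)
    (x₀ : EuclideanSpace ℝ (Fin q)) (hX0 : X 0 = fun _ => x₀)
    (hw₀ : 0 < ∑ j, a j * x₀ j)
    (hwn : ∀ n : ℕ, ∀ᵐ ω ∂μ, ∑ j, a j * X n ω j = (∑ j, a j * x₀ j) + (n : ℝ) * b)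
    (hcond : ∀ n : ℕ, μ[fun ω => X (n + 1) ω - X n ω | ℱ n] =ᵐ[μ]
      fun ω => ((∑ j, a j * x₀ j) + (n : ℝ) * b)⁻¹ • (Matrix.toEuclideanCLM (𝕜 := ℝ) A (X n ω)))
    (hmom : ∀ p : ℝ, 2 ≤ p →
      (⨆ n : ℕ, eLpNorm (fun ω => X (n + 1) ω - X n ω) (ENNReal.ofReal p) μ) < ⊤)
    (hspec : (b : ℂ) ∈ spectrum ℂ (A.map (fun x : ℝ => (x : ℂ))))
    (hmax : ∀ mu ∈ spectrum ℂ (A.map (fun x : ℝ => (x : ℂ))), mu.re ≤ b)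
    (lam2 : ℂ) (hlam2 : MemSecondEigSet (A.map (fun x : ℝ => (x : ℂ))) b lam2)
    (hcrit : lam2.re = b / 2)
    (h2max : ∀ mu : ℂ, MemSecondEigSet (A.map (fun x : ℝ => (x : ℂ))) b mu → mu.re ≤ b / 2)
    (P2 : Matrix (Fin q) (Fin q) ℂ)
    (hP2 : IsSpectralProj (A.map (fun x : ℝ => (x : ℂ))) lam2 P2)
    (ν₂ : ℕ) (hν2 : NilIndexOf (A.map (fun x : ℝ => (x : ℂ))) lam2 P2 ν₂)
    (hν2max : ∀ (mu : ℂ) (P' : Matrix (Fin q) (Fin q) ℂ) (ν' : ℕ),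
      MemSecondEigSet (A.map (fun x : ℝ => (x : ℂ))) b mu → mu.re = b / 2 →
      IsSpectralProj (A.map (fun x : ℝ => (x : ℂ))) mu P' →
      NilIndexOf (A.map (fun x : ℝ => (x : ℂ))) mu P' ν' → ν' ≤ ν₂)
    (Sig : Matrix (Fin q) (Fin q) ℝ) (hSig : Sig.PosSemidef)
    (νlim : Measure (EuclideanSpace ℝ (Fin q))) (hνlim : IsProbabilityMeasure νlim)
    (hGauss : ∀ l : Fin q → ℝ,
      Measure.map (fun x : EuclideanSpace ℝ (Fin q) => ∑ j, l j * x j) νlim =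
        ProbabilityTheory.gaussianReal 0 (Real.toNNReal (∑ i, ∑ j, l i * Sig i j * l j)))
    (hconv : ∀ f : BoundedContinuousFunction (EuclideanSpace ℝ (Fin q)) ℝ,
      Tendsto (fun n : ℕ =>
          ∫ ω, f ((1 / Real.sqrt ((n : ℝ) * Real.log n ^ (2 * ν₂ + 1))) •
            (X n ω - ∫ ω', X n ω' ∂μ)) ∂μ)
        atTop (nhds (∫ x, f x ∂νlim))) :
    (∀ r : ℝ, 1 ≤ r →
      Tendsto (fun n : ℕ =>
          ∫ ω, ‖(1 / Real.sqrt ((n : ℝ) * Real.log n ^ (2 * ν₂ + 1))) •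
            (X n ω - ∫ ω', X n ω' ∂μ)‖ ^ r ∂μ)
        atTop (nhds (∫ x, ‖x‖ ^ r ∂νlim))) ∧
    (∀ α : Fin q → ℕ,
      Tendsto (fun n : ℕ =>
          ∫ ω, ∏ j, ((1 / Real.sqrt ((n : ℝ) * Real.log n ^ (2 * ν₂ + 1))) •
            (X n ω - ∫ ω', X n ω' ∂μ) : EuclideanSpace ℝ (Fin q)) j ^ α j ∂μ)
        atTop (nhds (∫ x : EuclideanSpace ℝ (Fin q), ∏ j, x j ^ α j ∂νlim))) ∧
    (∀ i j : Fin q,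
      Tendsto (fun n : ℕ =>
          (∫ ω, (X n ω i - (∫ ω', X n ω' ∂μ) i) * (X n ω j - (∫ ω', X n ω' ∂μ) j) ∂μ) /
            ((n : ℝ) * Real.log n ^ (2 * ν₂ + 1)))
        atTop (nhds (Sig i j))) := by
  have ha0 : a ≠ 0 := by
    rintro rfl
    simp at hw₀
  have hpb := process_bound q μ ℱ a b hb A hA X hadp hXint x₀ hX0 _ hw₀ ha0 hwn hcond hmom
    h2max ν₂ hν2max
  set V : ℕ → ℝ := fun n => (n : ℝ) * Real.log n ^ (2 * ν₂ + 1) with hV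
  set Z : ℕ → Ω → EuclideanSpace ℝ (Fin q) := fun n ω =>
    (1 / Real.sqrt (V n)) • (X n ω - ∫ ω', X n ω' ∂μ) with hZdef
  have hV0 : ∀ n, 0 ≤ V n := by
    intro n
    have : 0 ≤ Real.log n := Real.log_natCast_nonneg n
    simp only [hV]
    positivity
  have hZ : ∀ n, AEStronglyMeasurable (Z n) μ := fun n =>
    (((hXint n).1.sub aestronglyMeasurable_const).const_smul (1 / Real.sqrt (V n)))
  have hmomZ : ∀ m : ℕ, 1 ≤ m → ∃ K : ℝ, ∀ n ≥ 2,
      Integrable (fun ω => ‖Z n ω‖ ^ (2 * m + 2)) μ ∧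
        ∫ ω, ‖Z n ω‖ ^ (2 * m + 2) ∂μ ≤ K := by
    intro m hm
    obtain ⟨hYm, D, hD, hb⟩ := hpb m hm
    refine ⟨D ^ (m + 1), fun n hn => ?_⟩
    have hZm : MemLp (Z n) (2 * m + 2 : ℕ) μ := (hYm n).const_smul (1 / Real.sqrt (V n))
    refine ⟨hZm.integrable_norm_pow (by positivity), ?_⟩
    rw [lpNorm_pow_even m hZm, show 2 * m + 2 = 2 * (m + 1) by ring, pow_mul]
    refine pow_le_pow_left₀ (sq_nonneg _) ?_ _
    have h1 : lpNorm (Z n) (2 * (m + 1) : ℕ) μ = (1 / Real.sqrt (V n)) *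
        lpNorm (fun ω => X n ω - ∫ ω', X n ω' ∂μ) (2 * m + 2 : ℕ) μ := by
      have h2 := lpNorm_const_smul (p := (2 * m + 2 : ℕ)) (1 / Real.sqrt (V n))
        (fun ω => X n ω - ∫ ω', X n ω' ∂μ) μ
      rw [coe_nnnorm, Real.norm_of_nonneg (by positivity)] at h2
      exact h2
    have hVp : 0 < V n := by
      have hn1 : (1 : ℝ) < n := by exact_mod_cast hn
      have := Real.log_pos hn1
      simp only [hV]
      positivity
    rw [h1, mul_pow, div_pow, Real.sq_sqrt hVp.le, one_pow, one_div, inv_mul_le_iff₀ hVp, mul_comm (V n)]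
    exact hb n hn
  have hgen := conv_of_growth νlim Z hZ hconv hmomZ
  refine ⟨?_, ?_, ?_⟩
  · intro r hr
    refine hgen (fun x => ‖x‖ ^ r) ?_ ⌈r⌉₊ ?_
    · exact continuous_norm.rpow_const fun x => Or.inr (by linarith)
    · intro x
      rw [abs_of_nonneg (by positivity)]
      rcases le_total ‖x‖ 1 with h | h
      · have h1 := Real.rpow_le_one (norm_nonneg x) h (by linarith : 0 ≤ r)
        have h2 : 0 ≤ ‖x‖ ^ ⌈r⌉₊ := by positivity
        linarith
      · have h1 := Real.rpow_le_rpow_of_exponent_le h (Nat.le_ceil r)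
        rw [Real.rpow_natCast] at h1
        linarith
  · intro α
    refine hgen (fun x => ∏ j, x j ^ α j) (by fun_prop) (∑ j, α j) ?_
    intro x
    rw [Finset.abs_prod, ← Finset.prod_pow_eq_pow_sum]
    have h1 : ∏ j, |x j ^ α j| ≤ ∏ j, ‖x‖ ^ α j := by
      refine Finset.prod_le_prod (fun j _ => abs_nonneg _) fun j _ => ?_
      rw [abs_pow]
      exact pow_le_pow_left₀ (abs_nonneg _) (PiLp.norm_apply_le x j) _
    linarith
  · intro i j
    have h := hgen (fun x => x i * x j) (by fun_prop) 2 (fun x => by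
      rw [abs_mul, sq]
      have h1 : |x i| ≤ ‖x‖ := PiLp.norm_apply_le x i
      have h2 : |x j| ≤ ‖x‖ := PiLp.norm_apply_le x j
      have h3 := mul_le_mul h1 h2 (abs_nonneg _) (norm_nonneg _)
      linarith)
    rw [gauss_cov Sig hSig νlim hGauss i j] at h
    refine h.congr fun n => ?_
    rw [← integral_div]
    refine integral_congr_ae (ae_of_all _ fun ω => ?_)
    have hs := Real.mul_self_sqrt (hV0 n)
    simp only [hZdef, PiLp.smul_apply, PiLp.sub_apply, smul_eq_mul]
    change _ = _ / V n
    conv_rhs => rw [← hs]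
    ring
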